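/- Let (s,u) be a solution of problem (P) on (0,T) with initial data (s₀,φ) ∈ W, where T ∈ (0,∞]. Then for every t ∈ (0,T): (d/dt) E(s(t),u(t)) = −∫₀^{s(t)} |∂_t u(t,x)|² dx − (1/2) s'(t)³, and ‖u(t)‖_{L¹} − ‖φ‖_{L¹} = s₀ − s(t) + ∫₀^t u(τ,0)^p dτ. In particular, for all t₁, t₂ ∈ (0,T) with t₁ ≤ t₂, ∫_{t₁}^{t₂} ∫₀^{s(t)} |∂_t u|² dx dt + (1/2) ∫_{t₁}^{t₂} s'(t)³ dt = E(s(t₁),u(t₁)) − E(s(t₂),u(t₂)). -/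

import Mathlib

open Set MeasureTheory Filter Topology Real
open scoped ENNReal

noncomputable section

/-- `(s₀, φ)` belongs to the class `W`: `s₀ ∈ (0,∞)`, `φ` is Lipschitz on `[0,s₀]`,
not identically zero, nonnegative there, and vanishes at `s₀`. -/
def memW (s₀ : ℝ) (φ : ℝ → ℝ) : Prop :=
  0 < s₀ ∧ (∃ K : NNReal, LipschitzOnWith K φ (Icc 0 s₀)) ∧
    (∃ x ∈ Icc 0 s₀, φ x ≠ 0) ∧ (∀ x ∈ Icc 0 s₀, 0 ≤ φ x) ∧ φ s₀ = 0

/-- `(s,u)` is a solution of the one-phase Stefan problem (P) on `(0,T]` (finite `T`)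
with exponent `p` and initial data `(s₀,φ)`. -/
structure IsSolOn (p s₀ : ℝ) (φ : ℝ → ℝ) (T : ℝ) (s : ℝ → ℝ) (u : ℝ → ℝ → ℝ) : Prop where
  T_pos : 0 < T
  s_cont : ContinuousOn s (Icc 0 T)
  s_diff : ∀ t ∈ Ioc 0 T, DifferentiableAt ℝ s t
  s_deriv_cont : ContinuousOn (deriv s) (Ioc 0 T)
  s_pos : ∀ t ∈ Icc 0 T, 0 < s t
  ut_diff : ∀ t ∈ Ioc 0 T, ∀ x ∈ Ioo 0 (s t), DifferentiableAt ℝ (fun τ => u τ x) t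
  ux_diff : ∀ t ∈ Ioc 0 T, ∀ x ∈ Ioo 0 (s t), DifferentiableAt ℝ (u t) x
  uxx_diff : ∀ t ∈ Ioc 0 T, ∀ x ∈ Ioo 0 (s t), DifferentiableAt ℝ (deriv (u t)) x
  ut_cont : ContinuousOn (fun q : ℝ × ℝ => deriv (fun τ => u τ q.2) q.1)
      {q : ℝ × ℝ | q.1 ∈ Ioc 0 T ∧ q.2 ∈ Ioo 0 (s q.1)}
  uxx_cont : ContinuousOn (fun q : ℝ × ℝ => deriv (deriv (u q.1)) q.2)
      {q : ℝ × ℝ | q.1 ∈ Ioc 0 T ∧ q.2 ∈ Ioo 0 (s q.1)}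
  ux_cont : ContinuousOn (fun q : ℝ × ℝ => deriv (u q.1) q.2)
      {q : ℝ × ℝ | q.1 ∈ Ioc 0 T ∧ q.2 ∈ Icc 0 (s q.1)}
  u_cont : ContinuousOn (fun q : ℝ × ℝ => u q.1 q.2)
      {q : ℝ × ℝ | q.1 ∈ Icc 0 T ∧ q.2 ∈ Icc 0 (s q.1)}
  u_nonneg : ∀ t ∈ Icc 0 T, ∀ x ∈ Icc 0 (s t), 0 ≤ u t x
  heat : ∀ t ∈ Ioc 0 T, ∀ x ∈ Ioo 0 (s t),
      deriv (fun τ => u τ x) t = deriv (deriv (u t)) x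
  bc_zero : ∀ t ∈ Ioc 0 T, -deriv (u t) 0 = u t 0 ^ p
  bc_free : ∀ t ∈ Ioc 0 T, u t (s t) = 0
  stefan : ∀ t ∈ Ioc 0 T, deriv s t = -deriv (u t) (s t)
  init : ∀ x ∈ Icc 0 s₀, u 0 x = φ x
  init_s : s 0 = s₀

/-- `(s,u)` is a global-in-time solution of problem (P). -/
def IsGlobalSol (p s₀ : ℝ) (φ : ℝ → ℝ) (s : ℝ → ℝ) (u : ℝ → ℝ → ℝ) : Prop :=
  ∀ T : ℝ, 0 < T → IsSolOn p s₀ φ T s u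

/-- `Tm ∈ (0,∞]` is the maximal existence time of the solution `(s,u)` of (P) with
initial data `(s₀,φ)`: the solution exists on `(0,T]` for every `T < Tm`, and for
`T > Tm` problem (P) admits no solution on `(0,T]`. -/
def IsMaxSol (p s₀ : ℝ) (φ : ℝ → ℝ) (Tm : ℝ≥0∞) (s : ℝ → ℝ) (u : ℝ → ℝ → ℝ) : Prop :=
  0 < Tm ∧
    (∀ T : ℝ, 0 < T → ENNReal.ofReal T < Tm → IsSolOn p s₀ φ T s u) ∧
    (∀ T : ℝ, Tm < ENNReal.ofReal T → ¬∃ σ v, IsSolOn p s₀ φ T σ v)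

/-- The sup norm `‖u(t)‖_{L^∞(0,s(t))}`. -/
def supNorm (s : ℝ → ℝ) (u : ℝ → ℝ → ℝ) (t : ℝ) : ℝ :=
  sSup (u t '' Ioo 0 (s t))

/-- The `L¹` norm `‖u(t)‖_{L¹(0,s(t))}` of the nonnegative function `u(t,·)`. -/
def L1Norm (s : ℝ → ℝ) (u : ℝ → ℝ → ℝ) (t : ℝ) : ℝ :=
  ∫ x in (0:ℝ)..(s t), u t x

/-- The energy `E(s(t),u(t))`. -/
def energy (p : ℝ) (s : ℝ → ℝ) (u : ℝ → ℝ → ℝ) (t : ℝ) : ℝ :=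
  1 / 2 * (∫ x in (0:ℝ)..(s t), (deriv (u t) x) ^ 2) - u t 0 ^ (p + 1) / (p + 1)


def HeatAt (f fx fxx : ℝ → ℝ → ℝ) (t x : ℝ) : Prop :=
  (∀ᶠ y in 𝓝 x, HasDerivAt (f t) (fx t y) y) ∧ HasDerivAt (fx t) (fxx t x) x ∧
    HasDerivAt (fun τ => f τ x) (fxx t x) t

lemma right_max {g : ℝ → ℝ} {x c : ℝ} (h : ∀ᶠ y in 𝓝[>] x, g y ≤ g x)
    (hd : HasDerivWithinAt g c (Ici x) x) : c ≤ 0 := by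
  have h1 := hd.Ioi_of_Ici
  rw [hasDerivWithinAt_iff_tendsto_slope' (by simp)] at h1
  refine le_of_tendsto h1 ?_
  filter_upwards [h, self_mem_nhdsWithin] with y hy hy'
  have : x < y := hy'
  rw [slope_def_field]
  exact div_nonpos_of_nonpos_of_nonneg (by linarith) (by linarith)

lemma left_max {g : ℝ → ℝ} {x c : ℝ} (h : ∀ᶠ y in 𝓝[<] x, g y ≤ g x)
    (hd : HasDerivWithinAt g c (Iic x) x) : 0 ≤ c := by
  have h1 := hd.Iio_of_Iic
  rw [hasDerivWithinAt_iff_tendsto_slope' (by simp)] at h1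
  refine ge_of_tendsto h1 ?_
  filter_upwards [h, self_mem_nhdsWithin] with y hy hy'
  have : y < x := hy'
  rw [slope_def_field]
  exact div_nonneg_of_nonpos (by linarith) (by linarith)

lemma deriv2_max {g g' : ℝ → ℝ} {x c : ℝ} (hm : IsLocalMax g x)
    (h1 : ∀ᶠ y in 𝓝 x, HasDerivAt g (g' y) y) (h2 : HasDerivAt g' c x) : c ≤ 0 := by
  by_contra hc
  push Not at hc
  have h0 : g' x = 0 := hm.hasDerivAt_eq_zero h1.self_of_nhds
  have hs := h2.hasDerivWithinAt (s := Ioi x)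
  rw [hasDerivWithinAt_iff_tendsto_slope' (by simp)] at hs
  have h3 : ∀ᶠ y in 𝓝[>] x, 0 < g' y := by
    filter_upwards [hs.eventually (lt_mem_nhds hc), self_mem_nhdsWithin] with y hy hy'
    have : x < y := hy'
    rw [slope_def_field, h0, sub_zero] at hy
    have h4 : 0 < y - x := by linarith
    have := mul_pos hy h4
    rwa [div_mul_cancel₀ _ h4.ne'] at this
  have h5 : ∀ᶠ y in 𝓝[>] x, 0 < g' y ∧ HasDerivAt g (g' y) y ∧ g y ≤ g x :=
    h3.and ((h1.filter_mono nhdsWithin_le_nhds).and (hm.filter_mono nhdsWithin_le_nhds))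
  obtain ⟨e, he, hsub⟩ := mem_nhdsGT_iff_exists_Ioo_subset.1 h5
  have he' : x < e := he
  set y := (x + e) / 2 with hy
  have hxy : x < y := by linarith
  have hye : y < e := by linarith
  obtain ⟨ξ, hξ, hs⟩ := exists_hasDerivAt_eq_slope g g' hxy
    (by
      intro z hz
      rcases eq_or_lt_of_le hz.1 with h | h
      · rw [← h]; exact h1.self_of_nhds.continuousAt.continuousWithinAt
      · exact (hsub ⟨h, by linarith [hz.2]⟩).2.1.continuousAt.continuousWithinAt)
    (fun z hz => (hsub ⟨hz.1, by linarith [hz.2]⟩).2.1)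
  have h6 := (hsub ⟨hξ.1, by linarith [hξ.2]⟩ : _).1
  have h7 := (hsub ⟨hxy, hye⟩ : _).2.2
  rw [hs] at h6
  have : (g y - g x) / (y - x) ≤ 0 := div_nonpos_of_nonpos_of_nonneg (by linarith) (by linarith)
  linarith

lemma grad_upper {f fx fxx : ℝ → ℝ → ℝ} {t0 x0 r a M m : ℝ} (hr : 0 < r) (hM : 0 < M)
    (hm : 0 ≤ m) (ha : a ≤ x0) (har : x0 - r ≤ a)
    (hc : ContinuousOn (fun q : ℝ × ℝ => f q.1 q.2) (Icc (t0 - r ^ 2) t0 ×ˢ Icc a (x0 + r)))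
    (hh : ∀ t ∈ Ioc (t0 - r ^ 2) t0, ∀ x ∈ Ioo a (x0 + r), HeatAt f fx fxx t x)
    (hb : ∀ t ∈ Icc (t0 - r ^ 2) t0, ∀ x ∈ Icc a (x0 + r), |f t x| ≤ M)
    (hl : a = x0 - r ∨ ∀ t ∈ Ioc (t0 - r ^ 2) t0,
      ∃ d, |d| ≤ m ∧ HasDerivWithinAt (f t) d (Ici a) a)
    {y : ℝ} (hy : y ∈ Icc x0 (x0 + r)) :
    f t0 y - f t0 x0 ≤ (18 * M / r + m) * (y - x0) := by
  set P : ℝ := 2 * M / r ^ 2 with hP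
  have hPpos : 0 < P := by positivity
  have hPr : P * r ^ 2 = 2 * M := by rw [hP]; field_simp
  set A : ℝ := 18 * M / r + m with hA
  have hAr : A = 9 * (P * r) + m := by rw [hA, hP]; field_simp; ring
  set B : ℝ → ℝ → ℝ → ℝ := fun t ξ η => A * (η - ξ) - 2 * P * (η - ξ) ^ 2
    + P * ((ξ - x0) ^ 2 + (η - x0) ^ 2 + (t0 - t)) with hB
  set Φ : ℝ × ℝ × ℝ → ℝ := fun q => f q.1 q.2.2 - f q.1 q.2.1 - B q.1 q.2.1 q.2.2 with hΦ
  set b := x0 + r with hbdef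
  set Ω : Set (ℝ × ℝ × ℝ) := (Icc (t0 - r ^ 2) t0 ×ˢ Icc a b ×ˢ Icc a b) ∩ {q | q.2.1 ≤ q.2.2}
    with hΩ
  have hΩc : IsCompact Ω :=
    (isCompact_Icc.prod (isCompact_Icc.prod isCompact_Icc)).inter_right
      (isClosed_le (by fun_prop) (by fun_prop))
  have hΦc : ContinuousOn Φ Ω := by
    have e1 : ContinuousOn (fun q : ℝ × ℝ × ℝ => f q.1 q.2.2) Ω :=
      hc.comp (f := fun q : ℝ × ℝ × ℝ => (q.1, q.2.2)) (by fun_prop)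
        (fun q hq => ⟨hq.1.1, hq.1.2.2⟩)
    have e2 : ContinuousOn (fun q : ℝ × ℝ × ℝ => f q.1 q.2.1) Ω :=
      hc.comp (f := fun q : ℝ × ℝ × ℝ => (q.1, q.2.1)) (by fun_prop)
        (fun q hq => ⟨hq.1.1, hq.1.2.1⟩)
    have e3 : Continuous (fun q : ℝ × ℝ × ℝ => B q.1 q.2.1 q.2.2) := by
      simp only [hB]; fun_prop
    exact (e1.sub e2).sub e3.continuousOn
  have hr2 : 0 < r ^ 2 := by positivity
  have hyΩ : ((t0, x0, y) : ℝ × ℝ × ℝ) ∈ Ω := by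
    refine ⟨⟨⟨by simp; linarith, le_refl _⟩, ⟨ha, by simp [hbdef]; linarith⟩, ?_⟩, hy.1⟩
    exact ⟨by have := hy.1; simp; linarith, hy.2⟩
  obtain ⟨⟨t, ξ, η⟩, hq, hmax⟩ := hΩc.exists_isMaxOn ⟨_, hyΩ⟩ hΦc
  have key : Φ (t, ξ, η) ≤ 0 := by
    by_contra hpos
    push Not at hpos
    obtain ⟨⟨ht, hξ, hη⟩, hle⟩ := hq
    simp only [mem_ofPred_eq] at ht hξ hη hle
    have hbξ := abs_le.1 (hb t ht ξ hξ)
    have hbη := abs_le.1 (hb t ht η hη)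
    have hd2 : η - ξ ≤ 2 * r := by linarith [hη.2, hξ.1]
    have hd0 : 0 ≤ η - ξ := by linarith
    have hlin : 0 ≤ A * (η - ξ) - 2 * P * (η - ξ) ^ 2 := by
      have : 0 ≤ (A - 2 * P * (η - ξ)) * (η - ξ) := by
        apply mul_nonneg _ hd0
        have : P * (η - ξ) ≤ P * (2 * r) := by gcongr
        nlinarith [mul_pos hPpos hr]
      nlinarith
    have hs1 := mul_nonneg hPpos.le (sq_nonneg (ξ - x0))
    have hs2 := mul_nonneg hPpos.le (sq_nonneg (η - x0))
    have hs3 := mul_nonneg hPpos.le (by linarith [ht.2] : 0 ≤ t0 - t)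
    have hposE : 0 < f t η - f t ξ - (A * (η - ξ) - 2 * P * (η - ξ) ^ 2
        + P * ((ξ - x0) ^ 2 + (η - x0) ^ 2 + (t0 - t))) := hpos
    have ht' : t0 - r ^ 2 < t := by
      rcases eq_or_lt_of_le ht.1 with h | h
      · exfalso
        have : P * (t0 - t) = 2 * M := by rw [← h, ← hPr]; ring
        nlinarith
      · exact h
    have hηb : η < b := by
      rcases eq_or_lt_of_le hη.2 with h | h
      · exfalso
        have : P * (η - x0) ^ 2 = 2 * M := by rw [h, ← hPr, hbdef]; ring
        nlinarith
      · exact h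
    have hlt : ξ < η := by
      rcases eq_or_lt_of_le hle with h | h
      · exfalso
        subst h
        nlinarith
      · exact h
    have hmax' : ∀ t' ∈ Icc (t0 - r ^ 2) t0, ∀ ξ' ∈ Icc a b, ∀ η' ∈ Icc a b, ξ' ≤ η' →
        Φ (t', ξ', η') ≤ Φ (t, ξ, η) := fun t' h1 ξ' h2 η' h3 h4 => hmax (a := (t', ξ', η')) ⟨⟨h1, h2, h3⟩, h4⟩
    rcases eq_or_lt_of_le hξ.1 with hξa | hξa
    · rcases hl with hl | hl
      · have : P * (ξ - x0) ^ 2 = 2 * M := by rw [← hξa, ← hPr, hl]; ring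
        nlinarith
      · obtain ⟨d, hd, hder⟩ := hl t ⟨ht', ht.2⟩
        rw [hξa] at hder
        have hD : HasDerivWithinAt (fun z => Φ (t, z, η))
            (-d - (-A + 4 * P * (η - ξ) + 2 * P * (ξ - x0))) (Ici ξ) ξ := by
          have e1 : HasDerivAt (fun z => B t z η)
              (-A + 4 * P * (η - ξ) + 2 * P * (ξ - x0)) ξ := by
            have i := hasDerivAt_id' ξ
            have := (((i.const_sub η).const_mul A).sub
              (((i.const_sub η).pow 2).const_mul (2 * P))).add
              (((((i.sub_const x0).pow 2).add_const ((η - x0) ^ 2)).add_const (t0 - t)).const_mul P)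
            refine this.congr_deriv ?_
            simp; ring
          exact (hder.const_sub (f t η)).sub e1.hasDerivWithinAt
        have := right_max ?_ hD
        · have h1 := (abs_le.1 hd).2
          have h2 : P * (η - ξ) ≤ P * (2 * r) := by gcongr
          have h3 : P * (ξ - x0) ≤ 0 := mul_nonpos_of_nonneg_of_nonpos hPpos.le (by linarith)
          nlinarith [mul_pos hPpos hr]
        · filter_upwards [Ioo_mem_nhdsGT hlt] with z hz
          exact hmax' t ht z ⟨by linarith [hz.1], by linarith [hz.2]⟩ η hη hz.2.le
    · obtain ⟨h1, h2, h3⟩ := hh t ⟨ht', ht.2⟩ ξ ⟨hξa, by linarith⟩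
      obtain ⟨k1, k2, k3⟩ := hh t ⟨ht', ht.2⟩ η ⟨by linarith, hηb⟩
      have hξ2 : -fxx t ξ + 4 * P - 2 * P ≤ 0 := by
        refine deriv2_max (g := fun z => Φ (t, z, η))
          (g' := fun z => - fx t z - (-A + 4 * P * (η - z) + 2 * P * (z - x0))) (x := ξ) ?_ ?_ ?_
        · filter_upwards [Ioo_mem_nhds hξa hlt] with z hz
          exact hmax' t ht z ⟨hz.1.le, by linarith [hz.2]⟩ η hη hz.2.le
        · filter_upwards [h1] with z hz
          have e1 : HasDerivAt (fun z => B t z η)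
              (-A + 4 * P * (η - z) + 2 * P * (z - x0)) z := by
            have i := hasDerivAt_id' z
            have := (((i.const_sub η).const_mul A).sub
              (((i.const_sub η).pow 2).const_mul (2 * P))).add
              (((((i.sub_const x0).pow 2).add_const ((η - x0) ^ 2)).add_const (t0 - t)).const_mul P)
            refine this.congr_deriv ?_
            simp; ring
          exact (hz.const_sub (f t η)).sub e1
        · have i := hasDerivAt_id' ξ
          have := h2.neg.sub ((((i.const_sub η).const_mul (4 * P)).const_add (-A)).add
            ((i.sub_const x0).const_mul (2 * P)))
          refine this.congr_deriv ?_
          ring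
      have hη2 : fxx t η + 4 * P - 2 * P ≤ 0 := by
        refine deriv2_max (g := fun z => Φ (t, ξ, z))
          (g' := fun z => fx t z - (A - 4 * P * (z - ξ) + 2 * P * (z - x0))) (x := η) ?_ ?_ ?_
        · filter_upwards [Ioo_mem_nhds hlt hηb] with z hz
          exact hmax' t ht ξ hξ z ⟨by linarith [hz.1], hz.2.le⟩ hz.1.le
        · filter_upwards [k1] with z hz
          have e1 : HasDerivAt (fun z => B t ξ z)
              (A - 4 * P * (z - ξ) + 2 * P * (z - x0)) z := by
            have i := hasDerivAt_id' z
            have := (((i.sub_const ξ).const_mul A).sub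
              (((i.sub_const ξ).pow 2).const_mul (2 * P))).add
              (((((i.sub_const x0).pow 2).const_add ((ξ - x0) ^ 2)).add_const (t0 - t)).const_mul P)
            refine this.congr_deriv ?_
            simp; ring
          exact (hz.sub_const (f t ξ)).sub e1
        · have i := hasDerivAt_id' η
          have := k2.sub ((((i.sub_const ξ).const_mul (4 * P)).const_sub A).add
            ((i.sub_const x0).const_mul (2 * P)))
          refine this.congr_deriv ?_
          ring
      have ht2 : 0 ≤ fxx t η - fxx t ξ + P := by
        refine left_max (g := fun z => Φ (z, ξ, η)) (x := t) ?_ (HasDerivAt.hasDerivWithinAt ?_)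
        · filter_upwards [Ioo_mem_nhdsLT ht'] with z hz
          exact hmax' z ⟨hz.1.le, by linarith [hz.2, ht.2]⟩ ξ hξ η hη hle
        · have i := hasDerivAt_id' t
          have := (k3.sub h3).sub ((((i.const_sub t0).const_add ((ξ - x0) ^ 2 + (η - x0) ^ 2)).const_mul P).const_add
            (A * (η - ξ) - 2 * P * (η - ξ) ^ 2))
          refine this.congr_deriv ?_
          ring
      linarith
  have h1 : Φ (t0, x0, y) ≤ 0 := (hmax hyΩ).trans key
  simp only [hΦ, hB] at h1
  nlinarith [mul_nonneg hPpos.le (sq_nonneg (y - x0))]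

lemma HeatAt.neg {f fx fxx : ℝ → ℝ → ℝ} {t x : ℝ} (h : HeatAt f fx fxx t x) :
    HeatAt (fun t x => - f t x) (fun t x => - fx t x) (fun t x => - fxx t x) t x := by
  obtain ⟨h1, h2, h3⟩ := h
  refine ⟨?_, h2.neg, h3.neg⟩
  filter_upwards [h1] with y hy using hy.neg

lemma HeatAt.tdiff {f fx fxx : ℝ → ℝ → ℝ} {t x k : ℝ} (h : HeatAt f fx fxx t x)
    (h' : HeatAt f fx fxx (t + k) x) :
    HeatAt (fun t x => f (t + k) x - f t x) (fun t x => fx (t + k) x - fx t x)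
      (fun t x => fxx (t + k) x - fxx t x) t x := by
  obtain ⟨h1, h2, h3⟩ := h
  obtain ⟨k1, k2, k3⟩ := h'
  refine ⟨?_, k2.sub h2, HasDerivAt.sub (HasDerivAt.comp_add_const t k k3) h3⟩
  filter_upwards [h1, k1] with y hy hy' using hy'.sub hy

lemma HeatAt.xdiff {f fx fxx : ℝ → ℝ → ℝ} {t x k : ℝ} (h : HeatAt f fx fxx t x)
    (h' : HeatAt f fx fxx t (x + k)) :
    HeatAt (fun t x => (f t (x + k) - f t x) / k) (fun t x => (fx t (x + k) - fx t x) / k)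
      (fun t x => (fxx t (x + k) - fxx t x) / k) t x := by
  obtain ⟨h1, h2, h3⟩ := h
  obtain ⟨k1, k2, k3⟩ := h'
  refine ⟨?_, ((HasDerivAt.comp_add_const x k k2).sub h2).div_const k, (k3.sub h3).div_const k⟩
  have : Tendsto (fun y => y + k) (𝓝 x) (𝓝 (x + k)) := by
    apply Continuous.tendsto; fun_prop
  filter_upwards [h1, this.eventually k1] with y hy hy'
  exact ((HasDerivAt.comp_add_const y k hy').sub hy).div_const k

lemma HeatAt.dx {f fx fxx : ℝ → ℝ → ℝ} {t x : ℝ} (h : HeatAt f fx fxx t x) :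
    HasDerivAt (f t) (fx t x) x := h.1.self_of_nhds

lemma grad_bound {f fx fxx : ℝ → ℝ → ℝ} {t0 x0 r a M m d0 : ℝ} (hr : 0 < r) (hM : 0 < M)
    (hm : 0 ≤ m) (ha : a ≤ x0) (har : x0 - r ≤ a)
    (hc : ContinuousOn (fun q : ℝ × ℝ => f q.1 q.2) (Icc (t0 - r ^ 2) t0 ×ˢ Icc a (x0 + r)))
    (hh : ∀ t ∈ Ioc (t0 - r ^ 2) t0, ∀ x ∈ Ioo a (x0 + r), HeatAt f fx fxx t x)
    (hb : ∀ t ∈ Icc (t0 - r ^ 2) t0, ∀ x ∈ Icc a (x0 + r), |f t x| ≤ M)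
    (hl : a = x0 - r ∨ ∀ t ∈ Ioc (t0 - r ^ 2) t0,
      ∃ d, |d| ≤ m ∧ HasDerivWithinAt (f t) d (Ici a) a)
    (hd : HasDerivAt (f t0) d0 x0) :
    |d0| ≤ 18 * M / r + m := by
  set K := 18 * M / r + m with hK
  have gen : ∀ (g : ℝ → ℝ) (e : ℝ), HasDerivAt g e x0 →
      (∀ y ∈ Icc x0 (x0 + r), g y - g x0 ≤ K * (y - x0)) → e ≤ K := by
    intro g e he hg
    have h1 : HasDerivAt (fun y => g y - K * (y - x0)) (e - K) x0 := by
      have := he.sub (((hasDerivAt_id' x0).sub_const x0).const_mul K)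
      exact this.congr_deriv (by ring)
    have := right_max ?_ (h1.hasDerivWithinAt (s := Ici x0))
    · linarith
    · filter_upwards [Ioo_mem_nhdsGT (by linarith : x0 < x0 + r)] with y hy
      have := hg y ⟨hy.1.le, hy.2.le⟩
      simp only [sub_self, mul_zero]
      linarith
  rw [abs_le]
  constructor
  · have := gen (fun y => - f t0 y) (-d0) hd.neg (fun y hy => ?_)
    · linarith
    · refine grad_upper (f := fun t x => - f t x) (fx := fun t x => - fx t x)
        (fxx := fun t x => - fxx t x) hr hM hm ha har hc.neg (fun t ht x hx => (hh t ht x hx).neg)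
        (fun t ht x hx => by rw [abs_neg]; exact hb t ht x hx) ?_ hy
      rcases hl with hl | hl
      · exact Or.inl hl
      · right
        intro t ht
        obtain ⟨d, hd, hd'⟩ := hl t ht
        exact ⟨-d, by rwa [abs_neg], hd'.neg⟩
  · exact gen (f t0) d0 hd (fun y hy => grad_upper hr hM hm ha har hc hh hb hl hy)

lemma grad_int {f fx fxx : ℝ → ℝ → ℝ} {t0 x0 r M : ℝ} (hr : 0 < r) (hM : 0 < M)
    (hc : ContinuousOn (fun q : ℝ × ℝ => f q.1 q.2)
      (Icc (t0 - r ^ 2) t0 ×ˢ Icc (x0 - r) (x0 + r)))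
    (hh : ∀ t ∈ Icc (t0 - r ^ 2) t0, ∀ x ∈ Icc (x0 - r) (x0 + r), HeatAt f fx fxx t x)
    (hb : ∀ t ∈ Icc (t0 - r ^ 2) t0, ∀ x ∈ Icc (x0 - r) (x0 + r), |f t x| ≤ M) :
    |fx t0 x0| ≤ 18 * M / r := by
  have := grad_bound (m := 0) hr hM le_rfl (by linarith) le_rfl hc
    (fun t ht x hx => hh t ⟨ht.1.le, ht.2⟩ x ⟨hx.1.le, hx.2.le⟩) hb (Or.inl rfl)
    (hh t0 ⟨by nlinarith, le_rfl⟩ x0 ⟨by linarith, by linarith⟩).dx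
  simpa using this

lemma hess_int {f fx fxx : ℝ → ℝ → ℝ} {t0 x0 r M : ℝ} (hr : 0 < r) (hM : 0 < M)
    (hc : ContinuousOn (fun q : ℝ × ℝ => f q.1 q.2)
      (Icc (t0 - r ^ 2) t0 ×ˢ Icc (x0 - r) (x0 + r)))
    (hh : ∀ t ∈ Icc (t0 - r ^ 2) t0, ∀ x ∈ Icc (x0 - r) (x0 + r), HeatAt f fx fxx t x)
    (hb : ∀ t ∈ Icc (t0 - r ^ 2) t0, ∀ x ∈ Icc (x0 - r) (x0 + r), |f t x| ≤ M) :
    |fxx t0 x0| ≤ 2592 * M / r ^ 2 := by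
  have hr2 : 0 < r ^ 2 := by positivity
  have h1 : ∀ t ∈ Icc (t0 - r ^ 2 / 4) t0, ∀ x ∈ Icc (x0 - r / 2) (x0 + r / 2),
      |fx t x| ≤ 36 * M / r := by
    intro t ht x hx
    have e1 : Icc (t - (r / 2) ^ 2) t ⊆ Icc (t0 - r ^ 2) t0 :=
      Icc_subset_Icc (by nlinarith [ht.1]) ht.2
    have e2 : Icc (x - r / 2) (x + r / 2) ⊆ Icc (x0 - r) (x0 + r) :=
      Icc_subset_Icc (by linarith [hx.1]) (by linarith [hx.2])
    have := grad_int (t0 := t) (x0 := x) (half_pos hr) hM (hc.mono (prod_mono e1 e2))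
      (fun t ht x hx => hh t (e1 ht) x (e2 hx)) (fun t ht x hx => hb t (e1 ht) x (e2 hx))
    refine this.trans (le_of_eq ?_)
    field_simp; norm_num
  have h2 : ∀ k ∈ Ioo 0 (r / 4), |(fx t0 (x0 + k) - fx t0 x0) / k| ≤ 2592 * M / r ^ 2 := by
    intro k hk
    have hk0 : 0 < k := hk.1
    have e1 : Icc (t0 - (r / 4) ^ 2) t0 ⊆ Icc (t0 - r ^ 2) t0 :=
      Icc_subset_Icc (by nlinarith) le_rfl
    have e1' : Icc (t0 - (r / 4) ^ 2) t0 ⊆ Icc (t0 - r ^ 2 / 4) t0 :=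
      Icc_subset_Icc (by nlinarith) le_rfl
    have e2 : Icc (x0 - r / 4) (x0 + r / 4) ⊆ Icc (x0 - r / 2) (x0 + r / 2) :=
      Icc_subset_Icc (by linarith) (by linarith)
    have e2' : Icc (x0 - r / 2) (x0 + r / 2) ⊆ Icc (x0 - r) (x0 + r) :=
      Icc_subset_Icc (by linarith) (by linarith)
    have e3 : ∀ x ∈ Icc (x0 - r / 4) (x0 + r / 4), x + k ∈ Icc (x0 - r / 2) (x0 + r / 2) :=
      fun x hx => ⟨by linarith [hx.1, hk.1], by linarith [hx.2, hk.2]⟩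
    have := grad_int (t0 := t0) (x0 := x0) (r := r / 4) (M := 36 * M / r)
      (f := fun t x => (f t (x + k) - f t x) / k)
      (fx := fun t x => (fx t (x + k) - fx t x) / k)
      (fxx := fun t x => (fxx t (x + k) - fxx t x) / k) (by positivity) (by positivity) ?_ ?_ ?_
    · refine this.trans (le_of_eq ?_)
      field_simp; norm_num
    · refine ContinuousOn.div_const (ContinuousOn.sub ?_ ?_) k
      · exact hc.comp (f := fun q : ℝ × ℝ => (q.1, q.2 + k)) (by fun_prop)
          (fun q hq => ⟨e1 hq.1, e2' (e3 _ hq.2)⟩)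
      · exact hc.mono (prod_mono e1 (e2.trans e2'))
    · intro t ht x hx
      exact (hh t (e1 ht) x (e2' (e2 hx))).xdiff (hh t (e1 ht) (x + k) (e2' (e3 x hx)))
    · intro t ht x hx
      have hsub : Icc x (x + k) ⊆ Icc (x0 - r / 2) (x0 + r / 2) :=
        fun z hz => ⟨(e2 hx).1.trans hz.1, hz.2.trans (e3 x hx).2⟩
      obtain ⟨c, hc1, hc2⟩ := exists_hasDerivAt_eq_slope (f t) (fx t) (by linarith : x < x + k)
        (fun z hz => (hh t (e1 ht) z (e2' (hsub hz))).dx.continuousAt.continuousWithinAt)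
        (fun z hz => (hh t (e1 ht) z (e2' (hsub ⟨hz.1.le, hz.2.le⟩))).dx)
      rw [add_sub_cancel_left] at hc2
      rw [← hc2]
      exact h1 t (e1' ht) c (hsub ⟨hc1.1.le, hc1.2.le⟩)
  have h3 := (hh t0 ⟨by linarith, le_rfl⟩ x0 ⟨by linarith, by linarith⟩).2.1
  have h4 := h3.hasDerivWithinAt (s := Ioi x0)
  rw [hasDerivWithinAt_iff_tendsto_slope' (by simp)] at h4
  refine le_of_tendsto h4.abs ?_
  filter_upwards [Ioo_mem_nhdsGT (by linarith : x0 < x0 + r / 4)] with y hy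
  have := h2 (y - x0) ⟨by linarith [hy.1], by linarith [hy.2]⟩
  rw [slope_def_field]
  simpa using this

lemma time_osc {f fx fxx : ℝ → ℝ → ℝ} {t0 x0 r N : ℝ} (hr : 0 < r) (hN : 0 < N)
    (hc : ContinuousOn (fun q : ℝ × ℝ => f q.1 q.2)
      (Icc (t0 - 2 * r ^ 2) t0 ×ˢ Icc (x0 - r) (x0 + r)))
    (hh : ∀ t ∈ Icc (t0 - 2 * r ^ 2) t0, ∀ x ∈ Icc (x0 - r) (x0 + r), HeatAt f fx fxx t x)
    (hb : ∀ t1 ∈ Icc (t0 - 2 * r ^ 2) t0, ∀ t2 ∈ Icc (t0 - 2 * r ^ 2) t0, t1 < t2 →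
      ∀ x ∈ Icc (x0 - r) (x0 + r), |f t2 x - f t1 x| ≤ N) :
    |fxx t0 x0| ≤ 2593 * N / r ^ 2 := by
  have hr2 : 0 < r ^ 2 := by positivity
  have hx0 : x0 ∈ Icc (x0 - r) (x0 + r) := ⟨by linarith, by linarith⟩
  obtain ⟨c, hc1, hc2⟩ := exists_hasDerivAt_eq_slope (fun τ => f τ x0) (fun τ => fxx τ x0)
    (by linarith : t0 - r ^ 2 < t0)
    (fun z hz => (hh z ⟨by linarith [hz.1], hz.2⟩ x0 hx0).2.2.continuousAt.continuousWithinAt)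
    (fun z hz => (hh z ⟨by linarith [hz.1], hz.2.le⟩ x0 hx0).2.2)
  have hA : |fxx c x0| ≤ N / r ^ 2 := by
    rw [hc2, abs_div, sub_sub_cancel, abs_of_pos hr2]
    gcongr
    exact hb _ ⟨by linarith, by linarith⟩ _ ⟨by linarith, le_rfl⟩ (by linarith) x0 hx0
  set k := t0 - c with hk
  have hkpos : 0 < k := by linarith [hc1.2]
  have hm1 : ∀ t ∈ Icc (c - r ^ 2) c, t ∈ Icc (t0 - 2 * r ^ 2) t0 :=
    fun t ht => ⟨by linarith [ht.1, hc1.1], by linarith [ht.2, hc1.2]⟩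
  have hm2 : ∀ t ∈ Icc (c - r ^ 2) c, t + k ∈ Icc (t0 - 2 * r ^ 2) t0 :=
    fun t ht => ⟨by linarith [ht.1, hc1.1], by linarith [ht.2, hc1.2]⟩
  have := hess_int (t0 := c) (x0 := x0) (f := fun t x => f (t + k) x - f t x)
    (fx := fun t x => fx (t + k) x - fx t x) (fxx := fun t x => fxx (t + k) x - fxx t x) hr hN
    ?_ ?_ ?_
  · have e : c + k = t0 := by rw [hk]; ring
    simp only [e] at this
    have h5 : |fxx t0 x0| ≤ |fxx t0 x0 - fxx c x0| + |fxx c x0| := by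
      have := abs_add_le (fxx t0 x0 - fxx c x0) (fxx c x0)
      simpa using this
    calc |fxx t0 x0| ≤ 2592 * N / r ^ 2 + N / r ^ 2 := by linarith
      _ = 2593 * N / r ^ 2 := by ring
  · refine ContinuousOn.sub ?_ ?_
    · exact hc.comp (f := fun q : ℝ × ℝ => (q.1 + k, q.2)) (by fun_prop)
        (fun q hq => ⟨hm2 _ hq.1, hq.2⟩)
    · exact hc.mono (fun q hq => ⟨hm1 _ hq.1, hq.2⟩)
  · intro t ht x hx
    exact (hh t (hm1 t ht) x hx).tdiff (hh _ (hm2 t ht) x hx)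
  · intro t ht x hx
    exact hb t (hm1 t ht) _ (hm2 t ht) (by linarith) x hx

lemma holder_upper {f fx fxx : ℝ → ℝ → ℝ} {t1 t2 x1 r L x : ℝ} (hr : 0 < r) (hL : 0 < L)
    (ht : t1 ≤ t2)
    (hc : ContinuousOn (fun q : ℝ × ℝ => f q.1 q.2) (Icc t1 t2 ×ˢ Icc x1 (x1 + r)))
    (hh : ∀ t ∈ Icc t1 t2, ∀ x ∈ Icc x1 (x1 + r), HeatAt f fx fxx t x)
    (hb : ∀ t ∈ Icc t1 t2, ∀ x ∈ Icc x1 (x1 + r), |fx t x| ≤ L)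
    (hx : x ∈ Icc x1 (x1 + r)) :
    f t2 x - f t1 x ≤ 2 * L * r + 5 * L / r * (t2 - t1) := by
  set Q := 2 * L / r with hQ
  have hQpos : 0 < Q := by positivity
  have hQr : Q * r = 2 * L := by rw [hQ]; field_simp
  set xm := x1 + r / 2 with hxm
  set B : ℝ → ℝ → ℝ := fun t y => f t1 x + L * r + Q * (y - xm) ^ 2 + 5 * L / r * (t - t1) with hB
  set Φ : ℝ × ℝ → ℝ := fun q => f q.1 q.2 - B q.1 q.2 with hΦ
  have hΦc : ContinuousOn Φ (Icc t1 t2 ×ˢ Icc x1 (x1 + r)) := by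
    refine hc.sub (Continuous.continuousOn ?_)
    simp only [hB]; fun_prop
  have hmem : ((t2, x) : ℝ × ℝ) ∈ Icc t1 t2 ×ˢ Icc x1 (x1 + r) := ⟨⟨ht, le_rfl⟩, hx⟩
  obtain ⟨⟨t, y⟩, hq, hmax⟩ := (isCompact_Icc.prod isCompact_Icc).exists_isMaxOn ⟨_, hmem⟩ hΦc
  obtain ⟨htm, hym⟩ := hq
  simp only at htm hym
  have hmax' : ∀ t' ∈ Icc t1 t2, ∀ y' ∈ Icc x1 (x1 + r), Φ (t', y') ≤ Φ (t, y) :=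
    fun t' h1 y' h2 => hmax (a := (t', y')) ⟨h1, h2⟩
  have key : Φ (t, y) ≤ 0 := by
    by_contra hpos
    push Not at hpos
    have hposE : 0 < f t y - (f t1 x + L * r + Q * (y - xm) ^ 2 + 5 * L / r * (t - t1)) := hpos
    have hs := mul_nonneg hQpos.le (sq_nonneg (y - xm))
    have ht1 : t1 < t := by
      rcases eq_or_lt_of_le htm.1 with h | h
      · exfalso
        rw [← h, sub_self, mul_zero, add_zero] at hposE
        have hlip : ‖f t1 y - f t1 x‖ ≤ L * ‖y - x‖ :=
          (convex_Icc x1 (x1 + r)).norm_image_sub_le_of_norm_hasDerivWithin_le (f' := fx t1)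
            (fun z hz => (hh t1 ⟨le_rfl, ht⟩ z hz).dx.hasDerivWithinAt)
            (fun z hz => hb t1 ⟨le_rfl, ht⟩ z hz) hx hym
        rw [Real.norm_eq_abs, Real.norm_eq_abs] at hlip
        have h1 : |y - x| ≤ r := abs_le.2 ⟨by linarith [hym.1, hx.2], by linarith [hym.2, hx.1]⟩
        have h2 := (abs_le.1 hlip).2
        nlinarith
      · exact h
    have hBy : ∀ z, HasDerivAt (fun z => B t z) (2 * Q * (z - xm)) z := by
      intro z
      have := ((((hasDerivAt_id' z).sub_const xm).pow 2).const_mul Q).const_add (f t1 x + L * r)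
      have := this.add_const (5 * L / r * (t - t1))
      refine this.congr_deriv ?_
      simp; ring
    have hfy := (hh t htm y hym)
    have hD : HasDerivAt (fun z => Φ (t, z)) (fx t y - 2 * Q * (y - xm)) y := hfy.dx.sub (hBy y)
    have hbb := abs_le.1 (hb t htm y hym)
    rcases eq_or_lt_of_le hym.1 with h | h1
    · have := right_max ?_ (hD.hasDerivWithinAt (s := Ici y))
      · have : 2 * Q * (y - xm) = - (2 * L) := by rw [← h, hxm, ← hQr]; ring
        linarith
      · filter_upwards [Ioo_mem_nhdsGT (by linarith : y < x1 + r)] with z hz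
        exact hmax' t htm z ⟨by linarith [hz.1], hz.2.le⟩
    rcases eq_or_lt_of_le hym.2 with h | h2
    · have := left_max ?_ (hD.hasDerivWithinAt (s := Iic y))
      · have : 2 * Q * (y - xm) = (2 * L) := by rw [h, hxm, ← hQr]; ring
        linarith
      · filter_upwards [Ioo_mem_nhdsLT (by linarith : x1 < y)] with z hz
        exact hmax' t htm z ⟨hz.1.le, by linarith [hz.2]⟩
    have c1 : fxx t y - 2 * Q ≤ 0 := by
      refine deriv2_max (g := fun z => Φ (t, z)) (g' := fun z => fx t z - 2 * Q * (z - xm))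
        (x := y) ?_ ?_ ?_
      · filter_upwards [Ioo_mem_nhds h1 h2] with z hz
        exact hmax' t htm z ⟨hz.1.le, hz.2.le⟩
      · filter_upwards [hfy.1] with z hz using hz.sub (hBy z)
      · have := hfy.2.1.sub (((hasDerivAt_id' y).sub_const xm).const_mul (2 * Q))
        exact this.congr_deriv (by ring)
    have c2 : 0 ≤ fxx t y - 5 * L / r := by
      refine left_max (g := fun z => Φ (z, y)) (x := t) ?_ (HasDerivAt.hasDerivWithinAt ?_)
      · filter_upwards [Ioo_mem_nhdsLT ht1] with z hz
        exact hmax' z ⟨hz.1.le, by linarith [hz.2, htm.2]⟩ y hym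
      · have := hfy.2.2.sub ((((hasDerivAt_id' t).sub_const t1).const_mul (5 * L / r)).const_add
          (f t1 x + L * r + Q * (y - xm) ^ 2))
        exact this.congr_deriv (by ring)
    have : 5 * L / r - 2 * Q = L / r := by rw [hQ]; ring
    have : 0 < L / r := by positivity
    linarith
  have h1 : f t2 x - (f t1 x + L * r + Q * (x - xm) ^ 2 + 5 * L / r * (t2 - t1)) ≤ 0 :=
    (hmax hmem).trans key
  have h2 : (x - xm) ^ 2 ≤ (r / 2) ^ 2 := by
    apply sq_le_sq'
    · linarith [hx.1]
    · linarith [hx.2]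
  have h3 : Q * (x - xm) ^ 2 ≤ Q * (r / 2) ^ 2 := by gcongr
  have h4 : Q * (r / 2) ^ 2 = L * r / 2 := by rw [hQ]; field_simp
  nlinarith [mul_pos hL hr]

lemma holder_time {f fx fxx : ℝ → ℝ → ℝ} {t1 t2 x1 L x : ℝ} (hL : 0 < L)
    (ht : t1 < t2)
    (hc : ContinuousOn (fun q : ℝ × ℝ => f q.1 q.2) (Icc t1 t2 ×ˢ Icc x1 (x1 + √(t2 - t1))))
    (hh : ∀ t ∈ Icc t1 t2, ∀ x ∈ Icc x1 (x1 + √(t2 - t1)), HeatAt f fx fxx t x)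
    (hb : ∀ t ∈ Icc t1 t2, ∀ x ∈ Icc x1 (x1 + √(t2 - t1)), |fx t x| ≤ L)
    (hx : x ∈ Icc x1 (x1 + √(t2 - t1))) :
    |f t2 x - f t1 x| ≤ 7 * L * √(t2 - t1) := by
  have hpos : 0 < √(t2 - t1) := Real.sqrt_pos.2 (by linarith)
  have e : 2 * L * √(t2 - t1) + 5 * L / √(t2 - t1) * (t2 - t1) = 7 * L * √(t2 - t1) := by
    have := Real.mul_self_sqrt (by linarith : 0 ≤ t2 - t1)
    nth_rewrite 3 [← this]
    field_simp; norm_num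
  have h1 := holder_upper hpos hL ht.le hc hh hb hx
  have h2 := holder_upper (f := fun t x => - f t x) (fx := fun t x => - fx t x)
        (fxx := fun t x => - fxx t x) hpos hL ht.le hc.neg (fun t ht x hx => (hh t ht x hx).neg)
        (fun t ht x hx => by rw [abs_neg]; exact hb t ht x hx) hx
  rw [e] at h1 h2
  rw [abs_le]
  constructor <;> linarith

lemma fb_upper {f fx fxx : ℝ → ℝ → ℝ} {s sd : ℝ → ℝ} {t0 ρ m e : ℝ} (hρ : 0 < ρ) (hm : 0 < m)
    (he : 0 ≤ e)
    (hs : ∀ t ∈ Icc (t0 - ρ ^ 2) t0, HasDerivAt s (sd t) t ∧ 0 ≤ sd t)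
    (hc : ContinuousOn (fun q : ℝ × ℝ => f q.1 q.2)
      {q : ℝ × ℝ | q.1 ∈ Icc (t0 - ρ ^ 2) t0 ∧ q.2 ∈ Icc (s q.1 - ρ) (s q.1)})
    (hh : ∀ t ∈ Icc (t0 - ρ ^ 2) t0, ∀ x ∈ Ioo (s t - ρ) (s t), HeatAt f fx fxx t x)
    (hb : ∀ t ∈ Icc (t0 - ρ ^ 2) t0, ∀ x ∈ Icc (s t - ρ) (s t), |f t x| ≤ m)
    (hbs : ∀ t ∈ Icc (t0 - ρ ^ 2) t0, |f t (s t)| ≤ e)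
    {x : ℝ} (hx : x ∈ Icc (s t0 - ρ) (s t0)) :
    f t0 x ≤ e + 2 * m / ρ * (s t0 - x) := by
  set P := m / ρ ^ 2 with hP
  have hPpos : 0 < P := by positivity
  have hPρ : P * ρ ^ 2 = m := by rw [hP]; field_simp
  have hρ2 : 0 < ρ ^ 2 := by positivity
  set Φ : ℝ → ℝ → ℝ := fun t y => f t y -
    (e + 2 * P * ρ * (s t - y) - P * (s t - y) ^ 2 + P * (t0 - t)) with hΦ
  have hsc : ContinuousOn s (Icc (t0 - ρ ^ 2) t0) :=
    fun t ht => (hs t ht).1.continuousAt.continuousWithinAt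
  set Ω : Set (ℝ × ℝ) := Icc (t0 - ρ ^ 2) t0 ×ˢ Icc 0 ρ with hΩ
  have hsc' : ContinuousOn (fun q : ℝ × ℝ => s q.1) Ω :=
    hsc.comp continuousOn_fst (fun q hq => hq.1)
  have hcont : ContinuousOn (fun q : ℝ × ℝ => Φ q.1 (s q.1 - q.2)) Ω := by
    have e1 : ContinuousOn (fun q : ℝ × ℝ => f q.1 (s q.1 - q.2)) Ω :=
      hc.comp (f := fun q : ℝ × ℝ => (q.1, s q.1 - q.2))
        (continuousOn_fst.prodMk (hsc'.sub continuousOn_snd))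
        (fun q hq => ⟨hq.1, by linarith [hq.2.2], by linarith [hq.2.1]⟩)
    simp only [hΦ]
    refine e1.sub ?_
    have e2 : ContinuousOn (fun q : ℝ × ℝ => s q.1 - (s q.1 - q.2)) Ω :=
      hsc'.sub (hsc'.sub continuousOn_snd)
    exact ((continuousOn_const.add (continuousOn_const.mul e2)).sub
      (continuousOn_const.mul (e2.pow 2))).add
      (Continuous.continuousOn (by fun_prop))
  have hmem : ((t0, s t0 - x) : ℝ × ℝ) ∈ Ω :=
    ⟨⟨by simp only; linarith, le_rfl⟩, by have := hx.2; simp only; linarith,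
      by have := hx.1; simp only; linarith⟩
  obtain ⟨⟨t, z⟩, hq, hmax⟩ := (isCompact_Icc.prod isCompact_Icc).exists_isMaxOn ⟨_, hmem⟩ hcont
  obtain ⟨htm, hz⟩ := hq
  simp only at htm hz
  have hmax' : ∀ t' ∈ Icc (t0 - ρ ^ 2) t0, ∀ y ∈ Icc (s t' - ρ) (s t'),
      Φ t' y ≤ Φ t (s t - z) := by
    intro t' ht' y hy
    have := hmax (a := (t', s t' - y)) ⟨ht', by have := hy.2; simp only; linarith,
      by have := hy.1; simp only; linarith⟩
    simpa using this
  have key : Φ t (s t - z) ≤ 0 := by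
    set y := s t - z with hy
    have hzy : s t - y = z := by rw [hy]; ring
    by_contra hpos
    push Not at hpos
    have hposE : 0 < f t y - (e + 2 * P * ρ * z - P * z ^ 2 + P * (t0 - t)) := by
      rw [← hzy]; exact hpos
    have hym : y ∈ Icc (s t - ρ) (s t) := ⟨by linarith [hz.2], by linarith [hz.1]⟩
    have hbb := abs_le.1 (hb t htm y hym)
    have hq1 : 0 ≤ 2 * P * ρ * z - P * z ^ 2 := by
      have : 0 ≤ P * z * (2 * ρ - z) :=
        mul_nonneg (mul_nonneg hPpos.le hz.1) (by linarith [hz.2])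
      nlinarith
    have hq2 : 0 ≤ P * (t0 - t) := mul_nonneg hPpos.le (by linarith [htm.2])
    have ht1 : t0 - ρ ^ 2 < t := by
      rcases eq_or_lt_of_le htm.1 with h | h
      · exfalso
        have : P * (t0 - t) = m := by rw [← h, ← hPρ]; ring
        linarith
      · exact h
    have hz0 : 0 < z := by
      rcases eq_or_lt_of_le hz.1 with h | h
      · exfalso
        have h1 : y = s t := by rw [hy, ← h, sub_zero]
        have h2 := abs_le.1 (hbs t htm)
        rw [← h1] at h2
        linarith
      · exact h
    have hzρ : z < ρ := by
      rcases eq_or_lt_of_le hz.2 with h | h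
      · exfalso
        have : 2 * P * ρ * z - P * z ^ 2 = m := by rw [h, ← hPρ]; ring
        linarith
      · exact h
    have hyo : y ∈ Ioo (s t - ρ) (s t) := ⟨by linarith, by linarith⟩
    obtain ⟨h1, h2, h3⟩ := hh t htm y hyo
    have c1 : fxx t y + 2 * P ≤ 0 := by
      refine deriv2_max (g := fun w => Φ t w)
        (g' := fun w => fx t w - (-2 * P * ρ + 2 * P * (s t - w))) (x := y) ?_ ?_ ?_
      · filter_upwards [Ioo_mem_nhds hyo.1 hyo.2] with w hw
        exact hmax' t htm w ⟨hw.1.le, hw.2.le⟩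
      · filter_upwards [h1] with w hw
        have i := (hasDerivAt_id' w).const_sub (s t)
        have := hw.sub ((((i.const_mul (2 * P * ρ)).const_add e).sub ((i.pow 2).const_mul P)).add_const
          (P * (t0 - t)))
        refine this.congr_deriv ?_
        simp; ring
      · have i := (hasDerivAt_id' y).const_sub (s t)
        have := h2.sub ((i.const_mul (2 * P)).const_add (-2 * P * ρ))
        exact this.congr_deriv (by ring)
    obtain ⟨hs1, hs2⟩ := hs t htm
    have c2 : 0 ≤ fxx t y - ((2 * P * ρ - 2 * P * (s t - y)) * sd t - P) := by
      refine left_max (g := fun w => Φ w y) (x := t) ?_ (HasDerivAt.hasDerivWithinAt ?_)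
      · have e1 : ∀ᶠ w in 𝓝[<] t, s w ∈ Ioo y (y + ρ) :=
          (hs1.continuousAt.eventually (Ioo_mem_nhds hyo.2 (by linarith [hyo.1]))).filter_mono
            nhdsWithin_le_nhds
        filter_upwards [Ioo_mem_nhdsLT ht1, e1] with w hw hw2
        exact hmax' w ⟨hw.1.le, by linarith [hw.2, htm.2]⟩ y ⟨by linarith [hw2.2], hw2.1.le⟩
      · have i := hs1.sub_const y
        have := h3.sub ((((i.const_mul (2 * P * ρ)).const_add e).sub ((i.pow 2).const_mul P)).add
          (((hasDerivAt_id' t).const_sub t0).const_mul P))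
        refine this.congr_deriv ?_
        simp; ring
    have : 0 ≤ (2 * P * ρ - 2 * P * (s t - y)) * sd t := by
      apply mul_nonneg _ hs2
      rw [hzy]
      nlinarith [mul_pos hPpos (by linarith : 0 < ρ - z)]
    linarith
  have h1 := (hmax' t0 ⟨by linarith, le_rfl⟩ x hx).trans key
  simp only [hΦ, sub_self, mul_zero, add_zero] at h1
  have h2 : 2 * m / ρ = 2 * P * ρ := by rw [hP]; field_simp
  rw [h2]
  nlinarith [mul_nonneg hPpos.le (sq_nonneg (s t0 - x))]

lemma zygmund {q : ℝ → ℝ} {h0 C M K : ℝ} (hh0 : h0 ≤ 1)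
    (h1 : ∀ h ∈ Ioc 0 (h0 / 2), |2 * q h - q (2 * h)| ≤ C * h)
    (h2 : ∀ h ∈ Ioc 0 h0, |q h| ≤ M) (hC : 0 ≤ C)
    (hK1 : M ≤ K * (h0 / 2) ^ (7 / 8 : ℝ)) (hK2 : 7 * C ≤ K) :
    ∀ h ∈ Ioc 0 h0, |q h| ≤ K * h ^ (7 / 8 : ℝ) := by
  have hK : 0 ≤ K := by linarith
  have h184 : (2 : ℝ) ^ (7 / 8 : ℝ) ≤ 1.84 := by
    rw [show (2 : ℝ) ^ (7 / 8 : ℝ) = ((2 : ℝ) ^ (7 : ℕ)) ^ (1 / 8 : ℝ) by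
      rw [← Real.rpow_natCast_mul (by norm_num)]; norm_num]
    rw [show (1.84 : ℝ) = ((1.84 : ℝ) ^ (8 : ℕ)) ^ (1 / 8 : ℝ) by
      rw [← Real.rpow_natCast_mul (by norm_num)]; norm_num]
    apply Real.rpow_le_rpow <;> norm_num
  have ind : ∀ n : ℕ, ∀ h ∈ Ioc 0 h0, h0 ≤ 2 ^ (n + 1) * h → |q h| ≤ K * h ^ (7 / 8 : ℝ) := by
    intro n
    induction n with
    | zero =>
      intro h hh hn
      refine (h2 h hh).trans (hK1.trans ?_)
      have : 0 < h0 := hh.1.trans_le hh.2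
      gcongr
      simp at hn; linarith
    | succ n ih =>
      intro h hh hn
      by_cases hc : h0 ≤ 2 ^ (n + 1) * h
      · exact ih h hh hc
      · push Not at hc
        have h2n : (2 : ℝ) ≤ 2 ^ (n + 1) := by
          have : (1 : ℝ) ≤ 2 ^ n := one_le_pow₀ (by norm_num)
          rw [pow_succ]; linarith
        have hh2 : 2 * h ≤ h0 := by nlinarith [hh.1]
        have e1 := ih (2 * h) ⟨by linarith [hh.1], hh2⟩ (by rw [pow_succ] at hn; linarith)
        have e2 := h1 h ⟨hh.1, by linarith⟩
        rw [Real.mul_rpow (by norm_num) hh.1.le] at e1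
        have e3 : h ≤ h ^ (7 / 8 : ℝ) := by
          nth_rewrite 1 [← Real.rpow_one h]
          exact Real.rpow_le_rpow_of_exponent_ge hh.1 (by linarith [hh.2]) (by norm_num)
        have e4 : K * (2 ^ (7 / 8 : ℝ) * h ^ (7 / 8 : ℝ)) ≤ K * (1.84 * h ^ (7 / 8 : ℝ)) := by
          have : 0 ≤ h ^ (7 / 8 : ℝ) := Real.rpow_nonneg hh.1.le _
          gcongr
        have e5 : C * h ≤ C * h ^ (7 / 8 : ℝ) := by gcongr
        have e6 : 7 * C * h ^ (7 / 8 : ℝ) ≤ K * h ^ (7 / 8 : ℝ) := by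
          have : 0 ≤ h ^ (7 / 8 : ℝ) := Real.rpow_nonneg hh.1.le _
          gcongr
        have e7 : 2 * |q h| ≤ |2 * q h - q (2 * h)| + |q (2 * h)| := by
          have := abs_add_le (2 * q h - q (2 * h)) (q (2 * h))
          simpa [abs_mul] using this
        have e8 : 0 ≤ K * h ^ (7 / 8 : ℝ) := mul_nonneg hK (Real.rpow_nonneg hh.1.le _)
        linarith
  intro h hh
  obtain ⟨n, hn⟩ := pow_unbounded_of_one_lt (h0 / h) (by norm_num : (1 : ℝ) < 2)
  refine ind n h hh ?_
  rw [div_lt_iff₀ hh.1] at hn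
  rw [pow_succ]
  have := hh.1
  have : 0 < (2 : ℝ) ^ n * h := by positivity
  nlinarith

section sol
variable {p s₀ T : ℝ} {φ s : ℝ → ℝ} {u : ℝ → ℝ → ℝ}

lemma sol_heat (hS : IsSolOn p s₀ φ T s u) {t x : ℝ} (ht : t ∈ Ioc 0 T) (hx : x ∈ Ioo 0 (s t)) :
    HeatAt u (fun t x => deriv (u t) x) (fun t x => deriv (deriv (u t)) x) t x := by
  refine ⟨?_, (hS.uxx_diff t ht x hx).hasDerivAt, ?_⟩
  · filter_upwards [Ioo_mem_nhds hx.1 hx.2] with y hy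
    exact (hS.ux_diff t ht y hy).hasDerivAt
  · have := (hS.ut_diff t ht x hx).hasDerivAt
    rwa [hS.heat t ht x hx] at this

lemma Ioc_Icc {t : ℝ} (ht : t ∈ Ioc 0 T) : t ∈ Icc 0 T := ⟨ht.1.le, ht.2⟩

lemma sol_ucont (hS : IsSolOn p s₀ φ T s u) {t : ℝ} (ht : t ∈ Icc 0 T) :
    ContinuousOn (u t) (Icc 0 (s t)) :=
  hS.u_cont.comp (f := fun x : ℝ => (t, x)) (by fun_prop) (fun x hx => ⟨ht, hx⟩)

lemma sol_uxcont (hS : IsSolOn p s₀ φ T s u) {t : ℝ} (ht : t ∈ Ioc 0 T) :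
    ContinuousOn (deriv (u t)) (Icc 0 (s t)) :=
  hS.ux_cont.comp (f := fun x : ℝ => (t, x)) (by fun_prop) (fun x hx => ⟨ht, hx⟩)

lemma sol_right (hS : IsSolOn p s₀ φ T s u) {t : ℝ} (ht : t ∈ Ioc 0 T) :
    HasDerivWithinAt (u t) (deriv (u t) 0) (Ici 0) 0 := by
  have hst := hS.s_pos t (Ioc_Icc ht)
  refine hasDerivWithinAt_Ici_of_tendsto_deriv (s := Ioo 0 (s t))
    (fun x hx => (hS.ux_diff t ht x hx).differentiableWithinAt)
    ((sol_ucont hS (Ioc_Icc ht) 0 ⟨le_rfl, hst.le⟩).mono Ioo_subset_Icc_self)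
    (Ioo_mem_nhdsGT hst) ?_
  have := (sol_uxcont hS ht 0 ⟨le_rfl, hst.le⟩).mono (Ioo_subset_Icc_self)
  have h2 : Tendsto (deriv (u t)) (𝓝[Ioo 0 (s t)] 0) (𝓝 (deriv (u t) 0)) := this
  rwa [nhdsWithin_Ioo_eq_nhdsGT hst] at h2

lemma sol_left (hS : IsSolOn p s₀ φ T s u) {t : ℝ} (ht : t ∈ Ioc 0 T) :
    HasDerivWithinAt (u t) (deriv (u t) (s t)) (Iic (s t)) (s t) := by
  have hst := hS.s_pos t (Ioc_Icc ht)
  refine hasDerivWithinAt_Iic_of_tendsto_deriv (s := Ioo 0 (s t))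
    (fun x hx => (hS.ux_diff t ht x hx).differentiableWithinAt)
    ((sol_ucont hS (Ioc_Icc ht) (s t) ⟨hst.le, le_rfl⟩).mono Ioo_subset_Icc_self)
    (Ioo_mem_nhdsLT hst) ?_
  have := (sol_uxcont hS ht (s t) ⟨hst.le, le_rfl⟩).mono (Ioo_subset_Icc_self)
  have h2 : Tendsto (deriv (u t)) (𝓝[Ioo 0 (s t)] (s t)) (𝓝 (deriv (u t) (s t))) := this
  rwa [nhdsWithin_Ioo_eq_nhdsLT hst] at h2

lemma sol_dx (hS : IsSolOn p s₀ φ T s u) {t x : ℝ} (ht : t ∈ Ioc 0 T) (hx : x ∈ Icc 0 (s t)) :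
    HasDerivWithinAt (u t) (deriv (u t) x) (Icc 0 (s t)) x := by
  rcases eq_or_lt_of_le hx.1 with h | h
  · rw [← h]; exact (sol_right hS ht).mono Icc_subset_Ici_self
  rcases eq_or_lt_of_le hx.2 with h' | h'
  · rw [h']; exact (sol_left hS ht).mono Icc_subset_Iic_self
  · exact (hS.ux_diff t ht x ⟨h, h'⟩).hasDerivAt.hasDerivWithinAt

lemma sol_sd (hS : IsSolOn p s₀ φ T s u) {t : ℝ} (ht : t ∈ Ioc 0 T) :
    HasDerivAt s (deriv s t) t ∧ 0 ≤ deriv s t := by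
  refine ⟨(hS.s_diff t ht).hasDerivAt, ?_⟩
  have hst := hS.s_pos t (Ioc_Icc ht)
  rw [hS.stefan t ht]
  refine left_max (g := fun x => - u t x) ?_ (sol_left hS ht).neg
  filter_upwards [Ioo_mem_nhdsLT hst] with y hy
  have := hS.u_nonneg t (Ioc_Icc ht) y ⟨hy.1.le, hy.2.le⟩
  rw [hS.bc_free t ht]
  linarith

lemma sol_mono (hS : IsSolOn p s₀ φ T s u) : MonotoneOn s (Icc 0 T) := by
  refine monotoneOn_of_deriv_nonneg (convex_Icc 0 T) hS.s_cont ?_ ?_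
  · rw [interior_Icc]
    exact fun t ht => (hS.s_diff t ⟨ht.1, ht.2.le⟩).differentiableWithinAt
  · rw [interior_Icc]
    exact fun t ht => (sol_sd hS ⟨ht.1, ht.2.le⟩).2

/-- compact slabs -/
lemma slab_compact {δ T : ℝ} {α β : ℝ → ℝ} (ha : ContinuousOn α (Icc δ T))
    (hb : ContinuousOn β (Icc δ T)) (hab : ∀ t ∈ Icc δ T, α t ≤ β t) :
    IsCompact {q : ℝ × ℝ | q.1 ∈ Icc δ T ∧ q.2 ∈ Icc (α q.1) (β q.1)} := by
  have h1 : ContinuousOn (fun q : ℝ × ℝ => α q.1 + q.2 * (β q.1 - α q.1))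
      (Icc δ T ×ˢ Icc (0 : ℝ) 1) := by
    have ha' : ContinuousOn (fun q : ℝ × ℝ => α q.1) (Icc δ T ×ˢ Icc (0 : ℝ) 1) :=
      ha.comp continuousOn_fst (fun q hq => hq.1)
    have hb' : ContinuousOn (fun q : ℝ × ℝ => β q.1) (Icc δ T ×ˢ Icc (0 : ℝ) 1) :=
      hb.comp continuousOn_fst (fun q hq => hq.1)
    exact ha'.add (continuousOn_snd.mul (hb'.sub ha'))
  have h2 := ((isCompact_Icc (a := δ) (b := T)).prod (isCompact_Icc (a := (0 : ℝ)) (b := 1))).image_of_continuousOn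
    (continuousOn_fst.prodMk h1)
  have h3 : ContinuousOn (fun q : ℝ × ℝ => (q.1, α q.1 + q.2 * (β q.1 - α q.1)))
      (Icc δ T ×ˢ Icc (0 : ℝ) 1) := continuousOn_fst.prodMk h1
  have h4 : {q : ℝ × ℝ | q.1 ∈ Icc δ T ∧ q.2 ∈ Icc (α q.1) (β q.1)} =
      ((fun q : ℝ × ℝ => (q.1, α q.1 + q.2 * (β q.1 - α q.1))) '' (Icc δ T ×ˢ Icc (0 : ℝ) 1)) := by
    ext ⟨t, x⟩
    constructor
    · rintro ⟨ht, hx⟩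
      simp only at ht hx
      rcases eq_or_lt_of_le (hx.1.trans hx.2) with h | h
      · refine ⟨(t, 0), ⟨ht, by simp⟩, ?_⟩
        have : x = α t := le_antisymm (by linarith [hx.2]) hx.1
        simp [this]
      · have hpos : 0 < β t - α t := by linarith
        refine ⟨(t, (x - α t) / (β t - α t)), ⟨ht, ?_, ?_⟩, ?_⟩
        · exact div_nonneg (by linarith [hx.1]) hpos.le
        · simp only; rw [div_le_one hpos]; linarith [hx.2]
        · simp only [Prod.mk.injEq, true_and]
          rw [div_mul_cancel₀ _ hpos.ne']; ring
    · rintro ⟨⟨t', y⟩, ⟨ht, hy⟩, h⟩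
      simp only [Prod.mk.injEq] at h ht hy
      obtain ⟨rfl, rfl⟩ := h
      have hab := hab t' ht
      refine ⟨ht, ?_, ?_⟩
      · have := mul_nonneg hy.1 (sub_nonneg.2 hab); simp only; linarith
      · have := mul_le_mul_of_nonneg_right hy.2 (sub_nonneg.2 hab); simp only; linarith
  rw [h4]; exact h2


structure Bd (s : ℝ → ℝ) (u : ℝ → ℝ → ℝ) (δ T L : ℝ) : Prop where
  hδ : 0 < δ
  hL : 1 ≤ L
  ux : ∀ t ∈ Icc δ T, ∀ x ∈ Icc 0 (s t), |deriv (u t) x| ≤ L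
  u : ∀ t ∈ Icc δ T, ∀ x ∈ Icc 0 (s t), |u t x| ≤ L

lemma sol_bd (hS : IsSolOn p s₀ φ T s u) {δ : ℝ} (hδ : 0 < δ) : ∃ L, Bd s u δ T L := by
  have hsub : Icc δ T ⊆ Icc 0 T := Icc_subset_Icc hδ.le le_rfl
  have hK := slab_compact (δ := δ) (T := T) (α := fun _ => 0) (β := s) continuousOn_const
    (hS.s_cont.mono hsub) (fun t ht => (hS.s_pos t (hsub ht)).le)
  obtain ⟨L1, h1⟩ := hK.exists_bound_of_continuousOn (f := fun q : ℝ × ℝ => deriv (u q.1) q.2)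
    (hS.ux_cont.mono (fun q hq => ⟨⟨hδ.trans_le hq.1.1, hq.1.2⟩, hq.2⟩))
  obtain ⟨L2, h2⟩ := hK.exists_bound_of_continuousOn (f := fun q : ℝ × ℝ => u q.1 q.2)
    (hS.u_cont.mono (fun q hq => ⟨hsub hq.1, hq.2⟩))
  refine ⟨max 1 (max L1 L2), hδ, le_max_left _ _, fun t ht x hx => ?_, fun t ht x hx => ?_⟩
  · exact (h1 (t, x) ⟨ht, hx⟩).trans ((le_max_left _ _).trans (le_max_right _ _))
  · exact (h2 (t, x) ⟨ht, hx⟩).trans ((le_max_right _ _).trans (le_max_right _ _))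

variable {δ L : ℝ}

lemma Bd.Ioc (hB : Bd s u δ T L) {t : ℝ} (ht : t ∈ Icc δ T) : t ∈ Ioc 0 T :=
  ⟨hB.hδ.trans_le ht.1, ht.2⟩

lemma Bd.Icc (hB : Bd s u δ T L) {t : ℝ} (ht : t ∈ Icc δ T) : t ∈ Icc 0 T :=
  ⟨hB.hδ.le.trans ht.1, ht.2⟩

lemma bd_s (hS : IsSolOn p s₀ φ T s u) (hB : Bd s u δ T L) {a b : ℝ} (ha : a ∈ Icc δ T)
    (hb : b ∈ Icc δ T) (hab : a ≤ b) : s a ≤ s b ∧ s b - s a ≤ L * (b - a) := by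
  refine ⟨sol_mono hS (hB.Icc ha) (hB.Icc hb) hab, ?_⟩
  have := (convex_Icc δ T).norm_image_sub_le_of_norm_hasDerivWithin_le (f := s) (f' := deriv s)
    (C := L) (fun z hz => (sol_sd hS (hB.Ioc hz)).1.hasDerivWithinAt) (fun z hz => by
      rw [hS.stefan z (hB.Ioc hz), norm_neg]
      exact hB.ux z hz _ ⟨(hS.s_pos z (hB.Icc hz)).le, le_rfl⟩) ha hb
  rw [Real.norm_eq_abs, Real.norm_eq_abs, abs_of_nonneg (by linarith : 0 ≤ b - a)] at this
  exact (le_abs_self _).trans this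

lemma bd_lip (hS : IsSolOn p s₀ φ T s u) (hB : Bd s u δ T L) {t x y : ℝ} (ht : t ∈ Icc δ T)
    (hx : x ∈ Icc 0 (s t)) (hy : y ∈ Icc 0 (s t)) : |u t y - u t x| ≤ L * |y - x| :=
  (convex_Icc 0 (s t)).norm_image_sub_le_of_norm_hasDerivWithin_le (f := u t) (f' := deriv (u t))
    (C := L) (fun z hz => sol_dx hS (hB.Ioc ht) hz) (fun z hz => hB.ux t ht z hz) hx hy

lemma rect_cont (hS : IsSolOn p s₀ φ T s u) {a b x1 x2 : ℝ} (ha : 0 ≤ a) (hb : b ≤ T)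
    (hx1 : 0 ≤ x1) (hx2 : x2 ≤ s a) :
    ContinuousOn (fun q : ℝ × ℝ => u q.1 q.2) (Icc a b ×ˢ Icc x1 x2) := by
  refine hS.u_cont.mono (fun q hq => ⟨⟨ha.trans hq.1.1, hq.1.2.trans hb⟩, hx1.trans hq.2.1, ?_⟩)
  have : s a ≤ s q.1 := sol_mono hS ⟨ha, hq.1.1.trans (hq.1.2.trans hb)⟩
    ⟨ha.trans hq.1.1, hq.1.2.trans hb⟩ hq.1.1
  exact hq.2.2.trans (hx2.trans this)

lemma rect_heat (hS : IsSolOn p s₀ φ T s u) {a t x : ℝ} (ha : 0 < a) (hat : a ≤ t) (hb : t ≤ T)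
    (hx : x ∈ Ioo 0 (s a)) :
    HeatAt u (fun t x => deriv (u t) x) (fun t x => deriv (deriv (u t)) x) t x := by
  have : s a ≤ s t := sol_mono hS ⟨ha.le, hat.trans hb⟩ ⟨ha.le.trans hat, hb⟩ hat
  exact sol_heat hS ⟨ha.trans_le hat, hb⟩ ⟨hx.1, hx.2.trans_le this⟩

lemma step1 (hS : IsSolOn p s₀ φ T s u) (hB : Bd s u δ T L) (hδT : δ ≤ T) :
    ∃ C, 0 < C ∧ ∀ a b, δ ≤ a → a < b → b ≤ T → ∀ x ∈ Icc 0 (s a),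
      |u b x - u a x| ≤ C * √(b - a) := by
  have hδ := hB.hδ
  have hL0 : 0 < L := by linarith [hB.hL]
  have hσ : 0 < s δ := hS.s_pos δ ⟨hδ.le, hδT⟩
  refine ⟨7 * L + 2 * L / s δ, by positivity, ?_⟩
  intro a b ha hab hb
  have haI : a ∈ Icc δ T := ⟨ha, by linarith⟩
  have hbI : b ∈ Icc δ T := ⟨by linarith, hb⟩
  have hsa : s δ ≤ s a := (bd_s hS hB ⟨le_rfl, hδT⟩ haI ha).1
  have hsab : s a ≤ s b := (bd_s hS hB haI hbI hab.le).1
  have hh : 0 < √(b - a) := Real.sqrt_pos.2 (by linarith)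
  by_cases hbig : s δ ≤ √(b - a)
  · intro x hx
    have h1 := abs_le.1 (hB.u b hbI x ⟨hx.1, hx.2.trans hsab⟩)
    have h2 := abs_le.1 (hB.u a haI x hx)
    have h3 : 2 * L ≤ 2 * L / s δ * √(b - a) := by
      rw [div_mul_eq_mul_div, le_div_iff₀ hσ]
      gcongr
    have h4 : 0 < 7 * L * √(b - a) := by positivity
    rw [abs_le]
    constructor <;> nlinarith
  · push Not at hbig
    have hint : ∀ x ∈ Ioo 0 (s a), |u b x - u a x| ≤ (7 * L + 2 * L / s δ) * √(b - a) := by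
      intro x hx
      have hsa0 : 0 < s a := by linarith
      set θ := x / s a with hθ
      have hθ0 : 0 < θ := div_pos hx.1 hsa0
      have hθ1 : θ < 1 := by rw [hθ, div_lt_one hsa0]; exact hx.2
      have hxθ : x = θ * s a := by rw [hθ]; field_simp
      set x1 := θ * (s a - √(b - a)) with hx1
      have hx1pos : 0 < x1 := mul_pos hθ0 (by linarith)
      have hx2 : x1 + √(b - a) < s a := by nlinarith
      have hsub : ∀ z ∈ Icc x1 (x1 + √(b - a)), z ∈ Ioo 0 (s a) :=
        fun z hz => ⟨by linarith [hz.1], by linarith [hz.2]⟩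
      have := holder_time (x1 := x1) (x := x) hL0 hab
        (rect_cont hS (by linarith) hb hx1pos.le hx2.le)
        (fun t ht z hz => rect_heat hS (by linarith) ht.1 (ht.2.trans hb) (hsub z hz))
        (fun t ht z hz => hB.ux t ⟨by linarith [ht.1], ht.2.trans hb⟩ z
          ⟨(hsub z hz).1.le, (hsub z hz).2.le.trans
            (bd_s hS hB haI ⟨by linarith [ht.1], ht.2.trans hb⟩ ht.1).1⟩)
        ⟨by rw [hxθ, hx1]; nlinarith, by rw [hxθ, hx1]; nlinarith⟩
      refine this.trans ?_
      gcongr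
      have : 0 < 2 * L / s δ := by positivity
      linarith
    intro x hx
    have hcl : closure (Ioo 0 (s a)) = Icc 0 (s a) := closure_Ioo (by linarith)
    refine le_on_closure (s := Ioo 0 (s a)) (f := fun x => |u b x - u a x|) hint ?_
      continuousOn_const (by rw [hcl]; exact hx)
    rw [hcl]
    exact (((sol_ucont hS (hB.Icc hbI)).mono (Icc_subset_Icc le_rfl hsab)).sub
      (sol_ucont hS (hB.Icc haI))).abs

end sol

section sol2
variable {p s₀ T : ℝ} {φ s : ℝ → ℝ} {u : ℝ → ℝ → ℝ} {δ L C1 : ℝ}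

lemma fb_bound {f fx fxx : ℝ → ℝ → ℝ} {s sd : ℝ → ℝ} {t0 ρ m e : ℝ} (hρ : 0 < ρ) (hm : 0 < m)
    (he : 0 ≤ e)
    (hs : ∀ t ∈ Icc (t0 - ρ ^ 2) t0, HasDerivAt s (sd t) t ∧ 0 ≤ sd t)
    (hc : ContinuousOn (fun q : ℝ × ℝ => f q.1 q.2)
      {q : ℝ × ℝ | q.1 ∈ Icc (t0 - ρ ^ 2) t0 ∧ q.2 ∈ Icc (s q.1 - ρ) (s q.1)})
    (hh : ∀ t ∈ Icc (t0 - ρ ^ 2) t0, ∀ x ∈ Ioo (s t - ρ) (s t), HeatAt f fx fxx t x)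
    (hb : ∀ t ∈ Icc (t0 - ρ ^ 2) t0, ∀ x ∈ Icc (s t - ρ) (s t), |f t x| ≤ m)
    (hbs : ∀ t ∈ Icc (t0 - ρ ^ 2) t0, |f t (s t)| ≤ e)
    {x : ℝ} (hx : x ∈ Icc (s t0 - ρ) (s t0)) :
    |f t0 x| ≤ e + 2 * m / ρ * (s t0 - x) := by
  have h1 := fb_upper hρ hm he hs hc hh hb hbs hx
  have h2 := fb_upper (f := fun t x => - f t x) (fx := fun t x => - fx t x)
    (fxx := fun t x => - fxx t x) hρ hm he hs hc.neg (fun t ht x hx => (hh t ht x hx).neg)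
    (fun t ht x hx => by rw [abs_neg]; exact hb t ht x hx)
    (fun t ht => by rw [abs_neg]; exact hbs t ht) hx
  rw [abs_le]
  constructor <;> linarith

lemma step2 (hS : IsSolOn p s₀ φ T s u) (hB : Bd s u δ T L) (hC1 : 0 < C1)
    (h1 : ∀ a b, δ ≤ a → a < b → b ≤ T → ∀ x ∈ Icc 0 (s a), |u b x - u a x| ≤ C1 * √(b - a))
    {t0 h ρ x : ℝ} (hρ : 0 < ρ) (hρs : ρ ≤ s δ) (hh : 0 < h) (ht0 : δ + ρ ^ 2 ≤ t0)
    (ht0h : t0 + h ≤ T) (hx : x ∈ Icc (s t0 - ρ) (s t0)) :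
    |u (t0 + h) x - u t0 x| ≤ L ^ 2 * h + 2 * (C1 * √h) / ρ * (s t0 - x) := by
  have hL0 : 0 < L := by linarith [hB.hL]
  have hδT : δ ≤ T := by nlinarith
  have hI : ∀ t ∈ Icc (t0 - ρ ^ 2) t0, t ∈ Icc δ T := fun t ht =>
    ⟨by linarith [ht.1], by linarith [ht.2]⟩
  have hI2 : ∀ t ∈ Icc (t0 - ρ ^ 2) t0, t + h ∈ Icc δ T := fun t ht =>
    ⟨by linarith [ht.1], by linarith [ht.2]⟩
  have hss : ∀ t ∈ Icc (t0 - ρ ^ 2) t0, s δ ≤ s t := fun t ht =>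
    (bd_s hS hB ⟨le_rfl, hδT⟩ (hI t ht) (hI t ht).1).1
  have hss2 : ∀ t ∈ Icc (t0 - ρ ^ 2) t0, s t ≤ s (t + h) ∧ s (t + h) - s t ≤ L * h := fun t ht => by
    have := bd_s hS hB (hI t ht) (hI2 t ht) (by linarith)
    simpa using this
  refine fb_bound (f := fun t x => u (t + h) x - u t x)
    (fx := fun t x => deriv (u (t + h)) x - deriv (u t) x)
    (fxx := fun t x => deriv (deriv (u (t + h))) x - deriv (deriv (u t)) x)
    (s := s) (sd := deriv s) (t0 := t0) hρ (by positivity) (by positivity)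
    (fun t ht => sol_sd hS (hB.Ioc (hI t ht))) ?_ ?_ ?_ ?_ hx
  · refine ContinuousOn.sub ?_ ?_
    · refine hS.u_cont.comp (f := fun q : ℝ × ℝ => (q.1 + h, q.2)) (by fun_prop) ?_
      intro q hq
      refine ⟨hB.Icc (hI2 _ hq.1), ?_, hq.2.2.trans (hss2 _ hq.1).1⟩
      have := hq.2.1; have := hss _ hq.1; simp only; linarith
    · refine hS.u_cont.mono ?_
      intro q hq
      refine ⟨hB.Icc (hI _ hq.1), ?_, hq.2.2⟩
      have := hq.2.1; have := hss _ hq.1; linarith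
  · intro t ht x hx
    have := hss t ht
    have hx' : x ∈ Ioo 0 (s t) := ⟨by linarith [hx.1], hx.2⟩
    exact (sol_heat hS (hB.Ioc (hI t ht)) hx').tdiff
      (sol_heat hS (hB.Ioc (hI2 t ht)) ⟨hx'.1, hx'.2.trans_le (hss2 t ht).1⟩)
  · intro t ht x hx
    have := hss t ht
    have := h1 t (t + h) (hI t ht).1 (by linarith) (hI2 t ht).2 x ⟨by linarith [hx.1], hx.2⟩
    simpa using this
  · intro t ht
    have h3 := hss t ht
    have hst : 0 < s t := by linarith
    obtain ⟨h4, h5⟩ := hss2 t ht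
    have := bd_lip hS hB (hI2 t ht) (x := s (t + h)) (y := s t) ⟨by linarith, le_rfl⟩ ⟨hst.le, h4⟩
    rw [hS.bc_free _ (hB.Ioc (hI2 t ht))] at this
    rw [hS.bc_free _ (hB.Ioc (hI t ht))]
    rw [abs_sub_comm (s t), abs_of_nonneg (by linarith : 0 ≤ s (t + h) - s t)] at this
    refine this.trans ?_
    nlinarith

lemma rpow_lip (hp : 1 < p) (hL : 0 ≤ L) {y z : ℝ} (hy : y ∈ Icc 0 L) (hz : z ∈ Icc 0 L) :
    |y ^ p - z ^ p| ≤ p * L ^ (p - 1) * |y - z| := by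
  refine (convex_Icc 0 L).norm_image_sub_le_of_norm_hasDerivWithin_le (f := fun x => x ^ p)
    (f' := fun x => p * x ^ (p - 1))
    (fun x hx => (Real.hasDerivAt_rpow_const (Or.inr hp.le)).hasDerivWithinAt) ?_ hz hy
  intro x hx
  have := Real.rpow_nonneg hx.1 (p - 1)
  rw [Real.norm_eq_abs, abs_of_nonneg (by positivity)]
  have : x ^ (p - 1) ≤ L ^ (p - 1) := Real.rpow_le_rpow hx.1 hx.2 (by linarith)
  gcongr

lemma step3 (hp : 1 < p) (hS : IsSolOn p s₀ φ T s u) (hB : Bd s u δ T L) (hC1 : 0 < C1)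
    (h1 : ∀ a b, δ ≤ a → a < b → b ≤ T → ∀ x ∈ Icc 0 (s a), |u b x - u a x| ≤ C1 * √(b - a))
    {t0 h r x : ℝ} (hr : 0 < r) (hh : 0 < h) (ht0 : δ + r ^ 2 ≤ t0)
    (ht0h : t0 + h ≤ T) (hx : 0 < x) (hxr : x + r ≤ s δ) :
    |deriv (u (t0 + h)) x - deriv (u t0) x| ≤
      (18 * C1 / r + p * L ^ (p - 1) * C1) * √h := by
  have hL0 : 0 < L := by linarith [hB.hL]
  have hδT : δ ≤ T := by nlinarith
  have hr2 : 0 < r ^ 2 := by positivity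
  have hI : ∀ t ∈ Icc (t0 - r ^ 2) t0, t ∈ Icc δ T := fun t ht =>
    ⟨by linarith [ht.1], by linarith [ht.2]⟩
  have hI2 : ∀ t ∈ Icc (t0 - r ^ 2) t0, t + h ∈ Icc δ T := fun t ht =>
    ⟨by linarith [ht.1], by linarith [ht.2]⟩
  have hss : ∀ t ∈ Icc δ T, s δ ≤ s t := fun t ht =>
    (bd_s hS hB ⟨le_rfl, hδT⟩ ht ht.1).1
  have hsq : 0 < √h := Real.sqrt_pos.2 hh
  have hpL : 0 < p * L ^ (p - 1) := by
    have := Real.rpow_pos_of_pos hL0 (p - 1)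
    have : 0 < p := by linarith
    positivity
  have main : ∀ a, 0 ≤ a → a ≤ x → x - r ≤ a → (a = x - r ∨ a = 0) →
      |deriv (u (t0 + h)) x - deriv (u t0) x| ≤
        18 * (C1 * √h) / r + p * L ^ (p - 1) * (C1 * √h) := by
    intro a ha0 hax har hcase
    have hsub : ∀ z ∈ Icc a (x + r), z ∈ Icc 0 (s δ) := fun z hz =>
      ⟨ha0.trans hz.1, hz.2.trans hxr⟩
    have hD : ∀ t ∈ Icc (t0 - r ^ 2) t0, ∀ z ∈ Icc a (x + r), HeatAt u (fun t x => deriv (u t) x)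
        (fun t x => deriv (deriv (u t)) x) t z → True := fun _ _ _ _ _ => trivial
    have hheat : ∀ t ∈ Icc δ T, ∀ z ∈ Ioo a (x + r), HeatAt u (fun t x => deriv (u t) x)
        (fun t x => deriv (deriv (u t)) x) t z := fun t ht z hz =>
      sol_heat hS (hB.Ioc ht) ⟨by linarith [hz.1], by linarith [hz.2, hss t ht]⟩
    have hb : ∀ t ∈ Icc (t0 - r ^ 2) t0, ∀ z ∈ Icc a (x + r),
        |u (t + h) z - u t z| ≤ C1 * √h := by
      intro t ht z hz
      have := h1 t (t + h) (hI t ht).1 (by linarith) (hI2 t ht).2 z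
        ⟨(hsub z hz).1, (hsub z hz).2.trans (hss t (hI t ht))⟩
      simpa using this
    have h0t : t0 ∈ Icc (t0 - r ^ 2) t0 := ⟨by linarith, le_rfl⟩
    refine grad_bound (f := fun t x => u (t + h) x - u t x)
      (fx := fun t x => deriv (u (t + h)) x - deriv (u t) x)
      (fxx := fun t x => deriv (deriv (u (t + h))) x - deriv (deriv (u t)) x)
      (t0 := t0) (x0 := x) (a := a) hr (by positivity) (by positivity) hax har ?_ ?_ hb ?_ ?_
    · refine ContinuousOn.sub ?_ ?_
      · refine hS.u_cont.comp (f := fun q : ℝ × ℝ => (q.1 + h, q.2)) (by fun_prop) ?_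
        intro q hq
        exact ⟨hB.Icc (hI2 _ hq.1), (hsub _ hq.2).1, (hsub _ hq.2).2.trans (hss _ (hI2 _ hq.1))⟩
      · refine hS.u_cont.mono ?_
        intro q hq
        exact ⟨hB.Icc (hI _ hq.1), (hsub _ hq.2).1, (hsub _ hq.2).2.trans (hss _ (hI _ hq.1))⟩
    · intro t ht z hz
      have ht' : t ∈ Icc (t0 - r ^ 2) t0 := ⟨ht.1.le, ht.2⟩
      exact (hheat t (hI t ht') z hz).tdiff (hheat _ (hI2 t ht') z hz)
    · rcases hcase with h | h
      · exact Or.inl h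
      · right
        subst h
        intro t ht
        have ht' : t ∈ Icc (t0 - r ^ 2) t0 := ⟨ht.1.le, ht.2⟩
        refine ⟨_, ?_, (sol_right hS (hB.Ioc (hI2 t ht'))).sub (sol_right hS (hB.Ioc (hI t ht')))⟩
        have e1 := hS.bc_zero _ (hB.Ioc (hI2 t ht'))
        have e2 := hS.bc_zero _ (hB.Ioc (hI t ht'))
        have e3 : deriv (u (t + h)) 0 - deriv (u t) 0 = -(u (t + h) 0 ^ p - u t 0 ^ p) := by
          rw [← e1, ← e2]; ring
        rw [e3, abs_neg]
        have mem : ∀ t ∈ Icc δ T, u t 0 ∈ Icc 0 L := fun t ht => by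
          have h0 : (0 : ℝ) ∈ Icc 0 (s t) := ⟨le_rfl, (hS.s_pos t (hB.Icc ht)).le⟩
          exact ⟨hS.u_nonneg t (hB.Icc ht) 0 h0, (abs_le.1 (hB.u t ht 0 h0)).2⟩
        refine (rpow_lip hp hL0.le (mem _ (hI2 t ht')) (mem _ (hI t ht'))).trans ?_
        gcongr
        exact hb t ht' 0 ⟨le_rfl, by linarith⟩
    · have hxs : ∀ t ∈ Icc δ T, x ∈ Ioo 0 (s t) := fun t ht => ⟨hx, by linarith [hss t ht]⟩
      exact (sol_heat hS (hB.Ioc (hI2 t0 h0t)) (hxs _ (hI2 t0 h0t))).dx.sub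
        (sol_heat hS (hB.Ioc (hI t0 h0t)) (hxs _ (hI t0 h0t))).dx
  have e : 18 * (C1 * √h) / r + p * L ^ (p - 1) * (C1 * √h) =
    (18 * C1 / r + p * L ^ (p - 1) * C1) * √h := by ring
  rw [← e]
  rcases le_total r x with h | h
  · exact main (x - r) (by linarith) (by linarith) le_rfl (Or.inl rfl)
  · exact main 0 le_rfl hx.le (by linarith) (Or.inr rfl)

lemma step5 (hp : 1 < p) (hS : IsSolOn p s₀ φ T s u) (hB : Bd s u δ T L) (hδT : δ ≤ T)
    (hC1 : 0 < C1)
    (h1 : ∀ a b, δ ≤ a → a < b → b ≤ T → ∀ x ∈ Icc 0 (s a), |u b x - u a x| ≤ C1 * √(b - a)) :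
    ∃ K h0 R, 0 < K ∧ 0 < h0 ∧ 0 < R ∧ R < s δ ∧ h0 ≤ δ ∧ ∀ b ∈ Icc (3 * δ) T, ∀ h ∈ Ioc 0 h0,
      ∀ x ∈ Ico 0 R, |u b x - u (b - h) x| ≤ K * h ^ (7 / 8 : ℝ) := by
  have hδ := hB.hδ
  have hL0 : 0 < L := by linarith [hB.hL]
  have hσ : 0 < s δ := hS.s_pos δ ⟨hδ.le, hδT⟩
  set r := min (√δ) (s δ / 4) with hr
  have hrpos : 0 < r := lt_min (Real.sqrt_pos.2 hδ) (by positivity)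
  have hrδ : r ^ 2 ≤ δ := by
    have : r ≤ √δ := min_le_left _ _
    calc r ^ 2 ≤ (√δ) ^ 2 := by gcongr
      _ = δ := Real.sq_sqrt hδ.le
  have hrs : r ≤ s δ / 4 := min_le_right _ _
  have hpL : 0 < p * L ^ (p - 1) := by
    have := Real.rpow_pos_of_pos hL0 (p - 1)
    have : 0 < p := by linarith
    positivity
  set C3 := 18 * C1 / r + p * L ^ (p - 1) * C1 with hC3
  have hC3pos : 0 < C3 := by positivity
  set h0 := min δ (min 1 ((s δ / 4) ^ 2)) with hh0
  have hh0pos : 0 < h0 := lt_min hδ (lt_min one_pos (by positivity))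
  have hh0δ : h0 ≤ δ := min_le_left _ _
  have hh01 : h0 ≤ 1 := (min_le_right _ _).trans (min_le_left _ _)
  have hh0s : h0 ≤ (s δ / 4) ^ 2 := (min_le_right _ _).trans (min_le_right _ _)
  have hc0 : 0 < (h0 / 2) ^ (7 / 8 : ℝ) := Real.rpow_pos_of_pos (by positivity) _
  set K := max (2 * L / (h0 / 2) ^ (7 / 8 : ℝ)) (7 * (7 * C3)) with hK
  have hKpos : 0 < K := lt_max_of_lt_left (by positivity)
  have hss : ∀ t ∈ Icc δ T, s δ ≤ s t := fun t ht =>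
    (bd_s hS hB ⟨le_rfl, hδT⟩ ht ht.1).1
  have hint : ∀ b ∈ Icc (3 * δ) T, ∀ h ∈ Ioc 0 h0,
      ∀ x ∈ Ioo 0 (s δ / 4), |u b x - u (b - h) x| ≤ K * h ^ (7 / 8 : ℝ) := by
    intro b hb h hh x hx
    have hIb : ∀ h ∈ Icc 0 h0, b - h ∈ Icc δ T := fun h hh =>
      ⟨by linarith [hh.2, hb.1], by linarith [hh.1, hb.2]⟩
    refine zygmund (q := fun h => u b x - u (b - h) x) (h0 := h0) (C := 7 * C3) (M := 2 * L) hh01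
      ?_ ?_ (by positivity) ?_ (le_max_right _ _) h hh
    · intro k hk
      have hk0 : 0 < k := hk.1
      have hsq : √k ≤ s δ / 4 := by
        rw [Real.sqrt_le_left (by positivity)]; linarith [hk.2]
      set a := b - 2 * k with ha
      have haδ : 2 * δ ≤ a := by linarith [hk.2, hb.1]
      have hak : a + k - a = k := by ring
      have hIa : ∀ t ∈ Icc a (a + k), t ∈ Icc δ T ∧ t + k ∈ Icc δ T := fun t ht =>
        ⟨⟨by linarith [ht.1], by linarith [ht.2, hb.2]⟩,
          ⟨by linarith [ht.1], by linarith [ht.2, hb.2]⟩⟩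
      have hxs : ∀ z ∈ Icc x (x + √(a + k - a)), z ∈ Ioo 0 (s δ / 2) := fun z hz => by
        rw [hak] at hz
        exact ⟨by linarith [hz.1, hx.1], by linarith [hz.2, hx.2]⟩
      have hxs' : ∀ z ∈ Icc x (x + √(a + k - a)), ∀ t ∈ Icc δ T, z ∈ Ioo 0 (s t) := fun z hz t ht =>
        ⟨(hxs z hz).1, by linarith [(hxs z hz).2, hss t ht]⟩
      have := holder_time (f := fun t x => u (t + k) x - u t x)
        (fx := fun t x => deriv (u (t + k)) x - deriv (u t) x)
        (fxx := fun t x => deriv (deriv (u (t + k))) x - deriv (deriv (u t)) x)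
        (t1 := a) (t2 := a + k) (x1 := x) (x := x) (L := C3 * √k)
        (by have := Real.sqrt_pos.2 hk0; positivity) (by linarith) ?_ ?_ ?_
        ⟨le_rfl, by have := Real.sqrt_nonneg (a + k - a); linarith⟩
      · have e1 : a + k + k = b := by rw [ha]; ring
        have e2 : a + k = b - k := by rw [ha]; ring
        rw [e1, hak, e2] at this
        have e3 : 2 * (u b x - u (b - k) x) - (u b x - u (b - 2 * k) x) =
          u b x - u (b - k) x - (u (b - k) x - u a x) := by rw [ha]; ring
        rw [e3]
        refine this.trans (le_of_eq ?_)
        have := Real.mul_self_sqrt hk0.le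
        linear_combination 7 * C3 * this
      · refine ContinuousOn.sub ?_ ?_
        · refine hS.u_cont.comp (f := fun q : ℝ × ℝ => (q.1 + k, q.2)) (by fun_prop) ?_
          intro q hq
          exact ⟨hB.Icc (hIa _ hq.1).2, Ioo_subset_Icc_self (hxs' _ hq.2 _ (hIa _ hq.1).2)⟩
        · refine hS.u_cont.mono ?_
          intro q hq
          exact ⟨hB.Icc (hIa _ hq.1).1, Ioo_subset_Icc_self (hxs' _ hq.2 _ (hIa _ hq.1).1)⟩
      · intro t ht z hz
        exact (sol_heat hS (hB.Ioc (hIa t ht).1) (hxs' z hz t (hIa t ht).1)).tdiff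
          (sol_heat hS (hB.Ioc (hIa t ht).2) (hxs' z hz _ (hIa t ht).2))
      · intro t ht z hz
        exact step3 hp hS hB hC1 h1 hrpos hk0 (by linarith [ht.1]) (hIa t ht).2.2 (hxs z hz).1
          (by linarith [(hxs z hz).2])
    · intro k hk
      have m1 := hIb 0 ⟨le_rfl, hh0pos.le⟩
      rw [sub_zero] at m1
      have m2 := hIb k ⟨hk.1.le, hk.2⟩
      have a1 := abs_le.1 (hB.u b m1 x ⟨hx.1.le, by linarith [hx.2, hss _ m1]⟩)
      have a2 := abs_le.1 (hB.u _ m2 x ⟨hx.1.le, by linarith [hx.2, hss _ m2]⟩)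
      rw [abs_le]; constructor <;> linarith
    · have : 2 * L / (h0 / 2) ^ (7 / 8 : ℝ) ≤ K := le_max_left _ _
      rwa [div_le_iff₀ hc0] at this
  refine ⟨K, h0, s δ / 4, hKpos, hh0pos, by positivity, by linarith, hh0δ, ?_⟩
  intro b hb h hh x hx
  have hcl : closure (Ioo 0 (s δ / 4)) = Icc 0 (s δ / 4) := closure_Ioo (by linarith)
  have m1 : b ∈ Icc δ T := ⟨by linarith [hb.1], hb.2⟩
  have m2 : b - h ∈ Icc δ T := ⟨by linarith [hh.2, hb.1], by linarith [hh.1, hb.2]⟩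
  refine le_on_closure (s := Ioo 0 (s δ / 4)) (f := fun x => |u b x - u (b - h) x|)
    (fun x hx => hint b hb h hh x hx) ?_
    continuousOn_const (by rw [hcl]; exact ⟨hx.1, hx.2.le⟩)
  rw [hcl]
  exact (((sol_ucont hS (hB.Icc m1)).mono (Icc_subset_Icc le_rfl (by linarith [hss _ m1]))).sub
    ((sol_ucont hS (hB.Icc m2)).mono (Icc_subset_Icc le_rfl (by linarith [hss _ m2])))).abs

end sol2

section sol6
variable {p s₀ T : ℝ} {φ s : ℝ → ℝ} {u : ℝ → ℝ → ℝ} {δ L C1 : ℝ}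

lemma step6 (hS : IsSolOn p s₀ φ T s u) (hB : Bd s u δ T L)
    {K h0 R : ℝ} (hK : 0 < K) (hh0 : 0 < h0) (hR : 0 < R) (hRs : R < s δ) (hhδ : h0 ≤ δ)
    (h5 : ∀ b ∈ Icc (3 * δ) T, ∀ h ∈ Ioc 0 h0,
      ∀ x ∈ Ico 0 R, |u b x - u (b - h) x| ≤ K * h ^ (7 / 8 : ℝ)) :
    ∃ R2, 0 < R2 ∧ ∀ t ∈ Icc (4 * δ) T, ∀ x ∈ Ioc 0 R2,
      |deriv (deriv (u t)) x| ≤ 10372 * K * x ^ (-1 / 4 : ℝ) := by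
  have hδ := hB.hδ
  refine ⟨min (min 1 h0) (R / 2), by positivity, fun t ht x hx => ?_⟩
  have hx0 : 0 < x := hx.1
  have hx1 : x ≤ 1 := hx.2.trans ((min_le_left _ _).trans (min_le_left _ _))
  have hx2 : x ≤ h0 := hx.2.trans ((min_le_left _ _).trans (min_le_right _ _))
  have hx3 : x ≤ R / 2 := hx.2.trans (min_le_right _ _)
  have hr2 : 2 * (x / 2) ^ 2 ≤ h0 := by nlinarith
  have hr2' : 0 < 2 * (x / 2) ^ 2 := by positivity
  have ha : 3 * δ ≤ t - 2 * (x / 2) ^ 2 := by linarith [ht.1]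
  have hsa : s δ ≤ s (t - 2 * (x / 2) ^ 2) :=
    (bd_s hS hB ⟨le_rfl, by linarith [ht.1, ht.2]⟩ ⟨by linarith, by linarith [ht.2]⟩ (by linarith)).1
  have hN : 0 < K * x ^ (7 / 4 : ℝ) := by positivity
  have := time_osc (f := u) (fx := fun t x => deriv (u t) x)
    (fxx := fun t x => deriv (deriv (u t)) x) (t0 := t) (x0 := x) (r := x / 2) (by positivity) hN
    (rect_cont hS (by linarith) ht.2 (by linarith) (by linarith))
    (fun τ hτ y hy => rect_heat hS (by linarith : 0 < t - 2 * (x / 2) ^ 2) hτ.1 (hτ.2.trans ht.2)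
      ⟨by linarith [hy.1], by linarith [hy.2]⟩) (fun t1 ht1 t2 ht2 h12 y hy => by
        have h := h5 t2 ⟨by linarith [ht2.1], ht2.2.trans ht.2⟩ (t2 - t1)
          ⟨by linarith, by linarith [ht1.1, ht2.2]⟩ y ⟨by linarith [hy.1], by linarith [hy.2]⟩
        rw [sub_sub_cancel] at h
        refine h.trans ?_
        have e : x ^ (7 / 4 : ℝ) = (x ^ 2) ^ (7 / 8 : ℝ) := by
          rw [← Real.rpow_natCast, ← Real.rpow_mul hx0.le]; norm_num
        rw [e]
        have h8 : t2 - t1 ≤ x ^ 2 := by nlinarith [ht1.1, ht2.2]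
        have h9 : 0 ≤ t2 - t1 := by linarith
        gcongr)
  refine this.trans (le_of_eq ?_)
  have e2 : x ^ (7 / 4 : ℝ) = x ^ (-1 / 4 : ℝ) * x ^ 2 := by
    rw [← Real.rpow_natCast x 2, ← Real.rpow_add hx0]; norm_num
  rw [e2]; field_simp; norm_num

lemma step7 (hS : IsSolOn p s₀ φ T s u) (hB : Bd s u δ T L) (hδT : δ ≤ T) (hC1 : 0 < C1)
    (h1 : ∀ a b, δ ≤ a → a < b → b ≤ T → ∀ x ∈ Icc 0 (s a), |u b x - u a x| ≤ C1 * √(b - a)) :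
    ∃ C ρ1, 0 < C ∧ 0 < ρ1 ∧ ∀ t ∈ Icc (4 * δ) T, ∀ x ∈ Ico (s t - ρ1) (s t),
      |deriv (deriv (u t)) x| ≤ C := by
  have hδ := hB.hδ
  have hL := hB.hL
  have hσ : 0 < s δ := hS.s_pos δ ⟨hδ.le, hδT⟩
  obtain ⟨ρ, hρ, hρs, hρ2⟩ : ∃ ρ, 0 < ρ ∧ ρ ≤ s δ ∧ ρ ^ 2 ≤ δ := by
    refine ⟨min (s δ) (√δ), by positivity, min_le_left _ _, ?_⟩
    have h0 : 0 ≤ min (s δ) (√δ) := by positivity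
    calc min (s δ) (√δ) ^ 2 ≤ √δ ^ 2 := by gcongr; exact min_le_right _ _
      _ = δ := Real.sq_sqrt hδ.le
  refine ⟨2593 * (2 * L ^ 2 + 20 * C1 / ρ), min (1 / L) (ρ / 2), by positivity, by positivity,
    fun t ht x hx => ?_⟩
  obtain ⟨r, hr⟩ : ∃ r, r = (s t - x) / 4 := ⟨_, rfl⟩
  have hr0 : 0 < r := by rw [hr]; linarith [hx.2]
  have hx1 : x = s t - 4 * r := by rw [hr]; ring
  have hr1 : 4 * r * L ≤ 1 := by
    have : 4 * r ≤ 1 / L := by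
      have := min_le_left (1 / L) (ρ / 2); linarith [hx.1]
    rwa [le_div_iff₀ (by linarith)] at this
  have hr3 : 4 * r ≤ ρ / 2 := by
      have := min_le_right (1 / L) (ρ / 2); linarith [hx.1]
  have hr4 : 2 * r ^ 2 ≤ δ := by nlinarith
  have hA : t - 2 * r ^ 2 ∈ Icc δ T := ⟨by linarith [ht.1], by nlinarith [ht.2]⟩
  have hsA : ∀ τ ∈ Icc (t - 2 * r ^ 2) t, s δ ≤ s τ ∧ s (t - 2 * r ^ 2) ≤ s τ ∧ s τ ≤ s t ∧
      s t - s τ ≤ r / 2 := by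
    intro τ hτ
    have hτI : τ ∈ Icc δ T := ⟨hA.1.trans hτ.1, hτ.2.trans ht.2⟩
    have htI : t ∈ Icc δ T := ⟨by linarith [ht.1], ht.2⟩
    have h2 := bd_s hS hB hτI htI hτ.2
    refine ⟨(bd_s hS hB ⟨le_rfl, hδT⟩ hτI hτI.1).1, (bd_s hS hB hA hτI hτ.1).1, h2.1, h2.2.trans ?_⟩
    have : L * (t - τ) ≤ L * (2 * r ^ 2) := by gcongr; linarith [hτ.1]
    nlinarith
  have hAA := hsA _ ⟨le_rfl, by nlinarith⟩
  have := time_osc (f := u) (fx := fun t x => deriv (u t) x)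
    (fxx := fun t x => deriv (deriv (u t)) x) (t0 := t) (x0 := x) (r := r)
    (N := (2 * L ^ 2 + 20 * C1 / ρ) * r ^ 2) hr0 (by positivity)
    (rect_cont hS (by linarith [hA.1]) ht.2 (by linarith) (by linarith))
    (fun τ hτ y hy => rect_heat hS (by linarith [hA.1] : 0 < t - 2 * r ^ 2) hτ.1 (hτ.2.trans ht.2)
      ⟨by linarith [hy.1], by linarith [hy.2]⟩) (fun t1 ht1 t2 ht2 h12 y hy => by
        have hs1 := hsA t1 ht1
        have h := step2 hS hB hC1 h1 (t0 := t1) (h := t2 - t1) (x := y) hρ hρs (by linarith)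
          (by linarith [ht1.1, ht.1]) (by linarith [ht2.2, ht.2])
          ⟨by linarith [hy.1], by linarith [hy.2]⟩
        rw [add_sub_cancel] at h
        refine h.trans ?_
        have h8 : t2 - t1 ≤ 2 * r ^ 2 := by linarith [ht1.1, ht2.2]
        have h9 : √(t2 - t1) ≤ 2 * r := by
          rw [Real.sqrt_le_left (by linarith)]; nlinarith
        have h10 : s t1 - y ≤ 5 * r := by linarith [hy.1]
        have h11 : 0 ≤ s t1 - y := by linarith [hy.2]
        calc L ^ 2 * (t2 - t1) + 2 * (C1 * √(t2 - t1)) / ρ * (s t1 - y)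
            ≤ L ^ 2 * (2 * r ^ 2) + 2 * (C1 * (2 * r)) / ρ * (5 * r) := by gcongr
          _ = _ := by ring)
  refine this.trans (le_of_eq ?_)
  field_simp

lemma mainprop (hp : 1 < p) (hS : IsSolOn p s₀ φ T s u) {t1 : ℝ} (ht1 : 0 < t1) (ht1T : t1 ≤ T) :
    ∃ C K h0, 0 < C ∧ 0 < K ∧ 0 < h0 ∧ (∀ t ∈ Icc t1 T, ∀ x ∈ Ioo 0 (s t),
      |deriv (deriv (u t)) x| ≤ C * (1 + x ^ (-1 / 4 : ℝ))) ∧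
      ∀ a b, t1 ≤ a → a < b → b ≤ T → b - a ≤ h0 → |u b 0 - u a 0| ≤ K * (b - a) ^ (7 / 8 : ℝ) := by
  set δ := t1 / 4 with hδd
  have hδ : 0 < δ := by positivity
  have h4δ : 4 * δ = t1 := by rw [hδd]; ring
  have hδT : δ ≤ T := by linarith
  obtain ⟨L, hB⟩ := sol_bd hS hδ
  obtain ⟨C1, hC1, h1⟩ := step1 hS hB hδT
  obtain ⟨K, h0, R, hK, hh0, hR, hRs, hhδ, h5⟩ := step5 hp hS hB hδT hC1 h1
  obtain ⟨R2, hR2, h6⟩ := step6 hS hB hK hh0 hR hRs hhδ h5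
  obtain ⟨C7, ρ1, hC7, hρ1, h7⟩ := step7 hS hB hδT hC1 h1
  have hσ : 0 < s δ := hS.s_pos δ ⟨hδ.le, hδT⟩
  set κ := min (min R2 ρ1) (s δ / 2) with hκ
  have hκ0 : 0 < κ := by positivity
  have hκ1 : κ ≤ R2 := (min_le_left _ _).trans (min_le_left _ _)
  have hκ2 : κ ≤ ρ1 := (min_le_left _ _).trans (min_le_right _ _)
  have hκ3 : κ ≤ s δ / 2 := min_le_right _ _
  have hI : ∀ t ∈ Icc t1 T, t ∈ Icc δ T := fun t ht => ⟨by linarith [ht.1], ht.2⟩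
  have hsub : Icc t1 T ⊆ Icc 0 T := Icc_subset_Icc ht1.le le_rfl
  obtain ⟨C8, h8⟩ := (slab_compact (δ := t1) (T := T) (α := fun _ => κ) (β := fun t => s t - κ)
    continuousOn_const ((hS.s_cont.mono hsub).sub continuousOn_const) (fun t ht => by
      have := (bd_s hS hB ⟨le_rfl, hδT⟩ (hI t ht) (hI t ht).1).1
      linarith)).exists_bound_of_continuousOn
      (f := fun q : ℝ × ℝ => deriv (deriv (u q.1)) q.2)
      (hS.uxx_cont.mono (fun q hq => ⟨⟨ht1.trans_le hq.1.1, hq.1.2⟩,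
        ⟨hκ0.trans_le hq.2.1, by linarith [hq.2.2]⟩⟩))
  refine ⟨10372 * K + C7 + |C8|, K, h0, by positivity, hK, hh0, fun t ht x hx => ?_, ?_⟩
  · have hx4 : 0 < x ^ (-1 / 4 : ℝ) := Real.rpow_pos_of_pos hx.1 _
    have hc8 := abs_nonneg C8
    have hc9 := le_abs_self C8
    have hA : 0 ≤ (C7 + |C8|) * x ^ (-1 / 4 : ℝ) := by positivity
    have hA2 : 0 ≤ K * x ^ (-1 / 4 : ℝ) := by positivity
    by_cases hc : x ≤ κ
    · have := h6 t (by rwa [h4δ]) x ⟨hx.1, hc.trans hκ1⟩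
      linarith
    by_cases hc' : s t - κ ≤ x
    · have := h7 t (by rwa [h4δ]) x ⟨by linarith, hx.2⟩
      linarith
    · push Not at hc hc'
      have := h8 (t, x) ⟨ht, ⟨hc.le, hc'.le⟩⟩
      rw [Real.norm_eq_abs] at this
      simp only at this
      linarith
  · intro a b ha hab hb hba
    have := h5 b ⟨by linarith, hb⟩ (b - a) ⟨by linarith, hba⟩ 0 ⟨le_rfl, hR⟩
    rwa [sub_sub_cancel] at this

end sol6

lemma ii_ioo {f : ℝ → ℝ} {σ : ℝ} (h : 0 ≤ σ) :
    ∫ x in (0:ℝ)..σ, f x = ∫ x, (Ioo 0 σ).indicator f x := by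
  rw [intervalIntegral.integral_of_le h, integral_Ioc_eq_integral_Ioo,
    integral_indicator measurableSet_Ioo]

lemma ii_congr {f g : ℝ → ℝ} {σ : ℝ} (h : 0 ≤ σ) (hfg : ∀ x ∈ Ioo 0 σ, f x = g x) :
    ∫ x in (0:ℝ)..σ, f x = ∫ x in (0:ℝ)..σ, g x := by
  rw [ii_ioo h, ii_ioo h]
  congr 1; ext x
  by_cases hx : x ∈ Ioo 0 σ
  · simp [hx, hfg x hx]
  · simp [hx]

lemma dct {l : Filter ℝ} [l.IsCountablyGenerated] {F : ℝ → ℝ → ℝ} {f g σ : ℝ → ℝ} {S : ℝ}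
    (hS : 0 < S) (hσ : Tendsto σ l (𝓝 S)) (hg : IntervalIntegrable g volume 0 (S + 1))
    (hc : ∀ᶠ τ in l, ContinuousOn (F τ) (Ioo 0 (σ τ)))
    (hb : ∀ᶠ τ in l, ∀ x ∈ Ioo 0 (σ τ), |F τ x| ≤ g x)
    (hl : ∀ x ∈ Ioo 0 S, Tendsto (fun τ => F τ x) l (𝓝 (f x))) :
    Tendsto (fun τ => ∫ x in (0:ℝ)..(σ τ), F τ x) l (𝓝 (∫ x in (0:ℝ)..S, f x)) := by
  have h0 : ∀ᶠ τ in l, 0 < σ τ := hσ.eventually (lt_mem_nhds hS)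
  have h1 : ∀ᶠ τ in l, σ τ < S + 1 := hσ.eventually (gt_mem_nhds (by linarith))
  rw [ii_ioo hS.le]
  refine Tendsto.congr' (f₁ := fun τ => ∫ x, (Ioo 0 (σ τ)).indicator (F τ) x) ?_ ?_
  · filter_upwards [h0] with τ hτ
    exact (ii_ioo hτ.le).symm
  refine tendsto_integral_filter_of_dominated_convergence
    ((Ioo 0 (S + 1)).indicator (fun x => |g x|)) ?_ ?_ ?_ ?_
  · filter_upwards [hc] with τ hτ
    exact (aestronglyMeasurable_indicator_iff measurableSet_Ioo).2
      (hτ.aestronglyMeasurable measurableSet_Ioo)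
  · filter_upwards [hb, h1] with τ hτ hτ1
    refine Eventually.of_forall (fun x => ?_)
    by_cases hx : x ∈ Ioo 0 (σ τ)
    · have hx' : x ∈ Ioo 0 (S + 1) := ⟨hx.1, hx.2.trans hτ1⟩
      rw [indicator_of_mem hx, indicator_of_mem hx']
      exact (hτ x hx).trans (le_abs_self _)
    · rw [indicator_of_notMem hx, norm_zero]
      exact indicator_nonneg (fun _ _ => abs_nonneg _) _
  · rw [integrable_indicator_iff measurableSet_Ioo]
    exact ((intervalIntegrable_iff_integrableOn_Ioo_of_le (by linarith)).1 hg).abs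
  · have : ∀ᵐ x : ℝ, x ≠ S := by
      simp [ae_iff]
    filter_upwards [this] with x hx
    by_cases hx0 : 0 < x
    · rcases lt_or_gt_of_ne hx with h | h
      · have hm : x ∈ Ioo 0 S := ⟨hx0, h⟩
        rw [indicator_of_mem hm]
        refine (hl x ⟨hx0, h⟩).congr' ?_
        filter_upwards [hσ.eventually (lt_mem_nhds h)] with τ hτ
        have hm' : x ∈ Ioo 0 (σ τ) := ⟨hx0, hτ⟩
        rw [indicator_of_mem hm']
      · rw [indicator_of_notMem (fun hh : x ∈ Ioo 0 S => by linarith [hh.2])]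
        refine tendsto_const_nhds.congr' ?_
        filter_upwards [hσ.eventually (gt_mem_nhds h)] with τ hτ
        rw [indicator_of_notMem (fun hh : x ∈ Ioo 0 (σ τ) => by linarith [hh.2])]
    · have : ∀ (A : ℝ) (G : ℝ → ℝ), (Ioo 0 A).indicator G x = 0 := fun A G =>
        indicator_of_notMem (fun hh => hx0 hh.1) _
      simp only [this]; exact tendsto_const_nhds

lemma intble {f g : ℝ → ℝ} {σ : ℝ} (h : 0 ≤ σ) (hg : IntervalIntegrable g volume 0 σ)
    (hc : ContinuousOn f (Ioo 0 σ)) (hb : ∀ x ∈ Ioo 0 σ, |f x| ≤ g x) :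
    IntervalIntegrable f volume 0 σ := by
  rw [intervalIntegrable_iff_integrableOn_Ioo_of_le h] at hg ⊢
  refine Integrable.mono' hg (hc.aestronglyMeasurable measurableSet_Ioo) ?_
  rw [ae_restrict_iff' measurableSet_Ioo]
  exact Eventually.of_forall hb

lemma gint (C r σ : ℝ) (hr : -1 < r) :
    IntervalIntegrable (fun x : ℝ => C * (1 + x ^ r)) volume 0 σ :=
  ((intervalIntegrable_const).add (intervalIntegral.intervalIntegrable_rpow' hr)).const_mul C

lemma sq_quarter {x : ℝ} (hx : 0 < x) :
    (1 + x ^ (-1 / 4 : ℝ)) ^ 2 ≤ 2 * (1 + x ^ (-1 / 2 : ℝ)) := by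
  have : x ^ (-1 / 2 : ℝ) = (x ^ (-1 / 4 : ℝ)) ^ 2 := by
    rw [← Real.rpow_natCast, ← Real.rpow_mul hx.le]; norm_num
  rw [this]; nlinarith [sq_nonneg (1 - x ^ (-1 / 4 : ℝ))]

lemma slope_mm (f : ℝ → ℝ) (t τ : ℝ) :
    slope f t τ = (f (max t τ) - f (min t τ)) / (max t τ - min t τ) := by
  rcases le_total t τ with h | h
  · rw [max_eq_right h, min_eq_left h, slope_def_field]
  · rw [max_eq_left h, min_eq_right h, slope_comm, slope_def_field]

lemma mean_int {f : ℝ → ℝ} {a b : ℝ} (hab : a ≤ b) (hf : ContinuousOn f (Icc a b)) :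
    ∃ c ∈ Icc a b, ∫ x in a..b, f x = (b - a) * f c := by
  rcases eq_or_lt_of_le hab with h | h
  · exact ⟨a, ⟨le_rfl, hab⟩, by rw [h]; simp⟩
  · obtain ⟨c, hc, h2⟩ := exists_eq_interval_average (f := f) h.ne (by rwa [uIcc_of_le hab])
    rw [uIoo_of_le hab] at hc
    refine ⟨c, Ioo_subset_Icc_self hc, ?_⟩
    rw [h2, interval_average_eq_div, mul_div_cancel₀ _ (by linarith)]

lemma trapezoid {p L A B : ℝ} (hp : 1 < p) (hL : 0 < L) (hA : A ∈ Icc 0 L) (hB : B ∈ Icc 0 L) :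
    |1 / 2 * (B - A) * (A ^ p + B ^ p) - (B ^ (p + 1) - A ^ (p + 1)) / (p + 1)| ≤
      p * L ^ (p - 1) * |B - A| ^ 2 := by
  have key : ∃ c ∈ uIcc A B, (B ^ (p + 1) - A ^ (p + 1)) / (p + 1) = (B - A) * c ^ p := by
    have hd : ∀ x : ℝ, HasDerivAt (fun y : ℝ => y ^ (p + 1) / (p + 1)) (x ^ p) x := by
      intro x
      have := (Real.hasDerivAt_rpow_const (x := x) (p := p + 1) (Or.inr (by linarith))).div_const
        (p + 1)
      have hp1 : p + 1 ≠ 0 := by linarith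
      rwa [add_sub_cancel_right, mul_div_cancel_left₀ _ hp1] at this
    have hc : Continuous (fun x : ℝ => x ^ p) :=
      Real.continuous_rpow_const (by linarith)
    have gen : ∀ a b, a ≤ b → ∃ c ∈ Icc a b,
        (b ^ (p + 1) - a ^ (p + 1)) / (p + 1) = (b - a) * c ^ p := by
      intro a b hab
      obtain ⟨c, hc1, hc2⟩ := mean_int (f := fun x : ℝ => x ^ p) hab hc.continuousOn
      refine ⟨c, hc1, ?_⟩
      rw [← hc2, intervalIntegral.integral_eq_sub_of_hasDerivAt (fun x _ => hd x)
        (hc.intervalIntegrable _ _)]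
      ring
    rcases le_total A B with h | h
    · rw [uIcc_of_le h]; exact gen A B h
    · obtain ⟨c, hc1, hc2⟩ := gen B A h
      rw [uIcc_of_ge h]
      refine ⟨c, hc1, ?_⟩
      linear_combination -hc2
  obtain ⟨c, hc, he⟩ := key
  have hcL : c ∈ Icc 0 L := by
    have := uIcc_subset_Icc hA hB hc
    exact this
  rw [he]
  have e : 1 / 2 * (B - A) * (A ^ p + B ^ p) - (B - A) * c ^ p =
      (B - A) * (1 / 2 * (A ^ p - c ^ p) + 1 / 2 * (B ^ p - c ^ p)) := by ring
  rw [e, abs_mul]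
  have h1 := rpow_lip hp hL.le hA hcL
  have h2 := rpow_lip hp hL.le hB hcL
  have h3 : |A - c| ≤ |B - A| := by
    rw [abs_sub_comm A c]; exact abs_sub_left_of_mem_uIcc hc
  have h4 : |B - c| ≤ |B - A| := abs_sub_right_of_mem_uIcc hc
  have hM : 0 ≤ p * L ^ (p - 1) := by
    have := Real.rpow_pos_of_pos hL (p - 1)
    have : 0 < p := by linarith
    positivity
  have h5 : |1 / 2 * (A ^ p - c ^ p) + 1 / 2 * (B ^ p - c ^ p)| ≤ p * L ^ (p - 1) * |B - A| := by
    refine (abs_add_le _ _).trans ?_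
    rw [abs_mul, abs_mul, abs_of_pos (by norm_num : (0:ℝ) < 1 / 2)]
    have h6 := h1.trans (mul_le_mul_of_nonneg_left h3 hM)
    have h7 := h2.trans (mul_le_mul_of_nonneg_left h4 hM)
    linarith
  calc |B - A| * |1 / 2 * (A ^ p - c ^ p) + 1 / 2 * (B ^ p - c ^ p)|
      ≤ |B - A| * (p * L ^ (p - 1) * |B - A|) := by gcongr
    _ = _ := by ring

section sol8
variable {p s₀ T : ℝ} {φ s : ℝ → ℝ} {u : ℝ → ℝ → ℝ} {t1 C : ℝ}

lemma sol_uxxcont (hS : IsSolOn p s₀ φ T s u) {t : ℝ} (ht : t ∈ Ioc 0 T) :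
    ContinuousOn (deriv (deriv (u t))) (Ioo 0 (s t)) :=
  hS.uxx_cont.comp (f := fun x : ℝ => (t, x)) (by fun_prop) (fun x hx => ⟨ht, hx⟩)

lemma D_bound (hS : IsSolOn p s₀ φ T s u) (ht1 : 0 < t1)
    (hC : ∀ t ∈ Icc t1 T, ∀ x ∈ Ioo 0 (s t), |deriv (deriv (u t)) x| ≤ C * (1 + x ^ (-1 / 4 : ℝ)))
    {a b x : ℝ} (ha : t1 ≤ a) (hab : a < b) (hb : b ≤ T) (hx : x ∈ Ioo 0 (s a)) :
    |u b x - u a x| ≤ (b - a) * (C * (1 + x ^ (-1 / 4 : ℝ))) := by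
  have hd : ∀ c ∈ Icc a b, HasDerivAt (fun τ => u τ x) (deriv (deriv (u c)) x) c := fun c hc =>
    (rect_heat hS (ht1.trans_le ha) hc.1 (hc.2.trans hb) hx).2.2
  have hsc : ∀ c ∈ Icc a b, s a ≤ s c := fun c hc =>
    sol_mono hS ⟨by linarith, by linarith⟩ ⟨by linarith [hc.1], hc.2.trans hb⟩ hc.1
  have := (convex_Icc a b).norm_image_sub_le_of_norm_hasDerivWithin_le (f := fun τ => u τ x)
    (f' := fun c => deriv (deriv (u c)) x) (C := C * (1 + x ^ (-1 / 4 : ℝ)))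
    (fun c hc => (hd c hc).hasDerivWithinAt)
    (fun c hc => hC c ⟨ha.trans hc.1, hc.2.trans hb⟩ x ⟨hx.1, hx.2.trans_le (hsc c hc)⟩)
    (left_mem_Icc.2 hab.le) (right_mem_Icc.2 hab.le)
  rw [Real.norm_eq_abs, Real.norm_eq_abs, abs_of_pos (by linarith : 0 < b - a)] at this
  linarith

lemma energy_diff (hS : IsSolOn p s₀ φ T s u) (ht1 : 0 < t1)
    (hC : ∀ t ∈ Icc t1 T, ∀ x ∈ Ioo 0 (s t), |deriv (deriv (u t)) x| ≤ C * (1 + x ^ (-1 / 4 : ℝ)))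
    {a b : ℝ} (ha : t1 ≤ a) (hab : a < b) (hb : b ≤ T) :
    energy p s u b - energy p s u a =
      1 / 2 * (u b (s a) * (deriv (u b) (s a) + deriv (u a) (s a)))
      - 1 / 2 * (∫ x in (0:ℝ)..(s a), (u b x - u a x) * (deriv (deriv (u b)) x + deriv (deriv (u a)) x))
      + 1 / 2 * (∫ x in (s a)..(s b), (deriv (u b) x) ^ 2)
      + (1 / 2 * (u b 0 - u a 0) * (u a 0 ^ p + u b 0 ^ p)
        - (u b 0 ^ (p + 1) - u a 0 ^ (p + 1)) / (p + 1)) := by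
  have haI : a ∈ Ioc 0 T := ⟨by linarith, by linarith⟩
  have hbI : b ∈ Ioc 0 T := ⟨by linarith, by linarith⟩
  have hsa := hS.s_pos a (Ioc_Icc haI)
  have hsab : s a ≤ s b := sol_mono hS (Ioc_Icc haI) (Ioc_Icc hbI) hab.le
  have sub1 : Icc 0 (s a) ⊆ Icc 0 (s b) := Icc_subset_Icc le_rfl hsab
  have sub2 : Ioo 0 (s a) ⊆ Ioo 0 (s b) := Ioo_subset_Ioo le_rfl hsab
  have cub := (sol_ucont hS (Ioc_Icc hbI)).mono sub1
  have cua := sol_ucont hS (Ioc_Icc haI)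
  have cxb := (sol_uxcont hS hbI).mono sub1
  have cxa := sol_uxcont hS haI
  have cxxb := (sol_uxxcont hS hbI).mono sub2
  have cxxa := sol_uxxcont hS haI
  have iD : IntervalIntegrable
      (fun x => (u b x - u a x) * (deriv (deriv (u b)) x + deriv (deriv (u a)) x)) volume 0 (s a) := by
    refine intble hsa.le (gint ((b - a) * C * (2 * C) * 2) (-1 / 2) (s a) (by norm_num)) ?_ ?_
    · exact ((cub.sub cua).mono Ioo_subset_Icc_self).mul (cxxb.add cxxa)
    · intro x hx
      have h1 := D_bound hS ht1 hC ha hab hb hx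
      have h2 := hC b ⟨by linarith, hb⟩ x (sub2 hx)
      have h3 := hC a ⟨ha, by linarith⟩ x hx
      have h4 := (abs_add_le (deriv (deriv (u b)) x) (deriv (deriv (u a)) x))
      have h5 := sq_quarter hx.1
      have h6 : (0:ℝ) ≤ (b - a) := by linarith
      have h7 : 0 ≤ C * (1 + x ^ (-1 / 4 : ℝ)) := (abs_nonneg _).trans h2
      rw [abs_mul]
      calc _ ≤ ((b - a) * (C * (1 + x ^ (-1 / 4 : ℝ)))) * (2 * (C * (1 + x ^ (-1 / 4 : ℝ)))) := by
            gcongr; linarith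
        _ = (b - a) * C * (2 * C) * ((1 + x ^ (-1 / 4 : ℝ)) ^ 2) := by ring
        _ ≤ (b - a) * C * (2 * C) * (2 * (1 + x ^ (-1 / 2 : ℝ))) := by
            refine mul_le_mul_of_nonneg_left h5 ?_
            have : (b - a) * C * (2 * C) = 2 * (b - a) * C ^ 2 := by ring
            rw [this]; positivity
        _ = _ := by ring
  have hu : uIcc 0 (s a) = Icc 0 (s a) := uIcc_of_le hsa.le
  have ib : IntervalIntegrable (fun x => (deriv (u b) x) ^ 2) volume 0 (s a) :=
    ContinuousOn.intervalIntegrable (by rw [hu]; exact cxb.pow 2)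
  have ia : IntervalIntegrable (fun x => (deriv (u a) x) ^ 2) volume 0 (s a) :=
    ContinuousOn.intervalIntegrable (by rw [hu]; exact cxa.pow 2)
  have ib2 : IntervalIntegrable (fun x => (deriv (u b) x) ^ 2) volume (s a) (s b) :=
    ContinuousOn.intervalIntegrable (by
      rw [uIcc_of_le hsab]
      exact ((sol_uxcont hS hbI).mono (Icc_subset_Icc hsa.le le_rfl)).pow 2)
  have parts := intervalIntegral.integral_eq_sub_of_hasDerivAt_of_le (a := 0) (b := s a)
    (f := fun x => (u b x - u a x) * (deriv (u b) x + deriv (u a) x))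
    (f' := fun x => ((deriv (u b) x) ^ 2 - (deriv (u a) x) ^ 2) +
      (u b x - u a x) * (deriv (deriv (u b)) x + deriv (deriv (u a)) x)) hsa.le
    ((cub.sub cua).mul (cxb.add cxa)) (fun x hx => by
      have h1 := (hS.ux_diff b hbI x (sub2 hx)).hasDerivAt
      have h2 := (hS.ux_diff a haI x hx).hasDerivAt
      have h3 := (hS.uxx_diff b hbI x (sub2 hx)).hasDerivAt
      have h4 := (hS.uxx_diff a haI x hx).hasDerivAt
      refine ((h1.sub h2).mul (h3.add h4)).congr_deriv ?_
      simp only [Pi.sub_apply, Pi.add_apply]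
      ring) ((ib.sub ia).add iD)
  rw [intervalIntegral.integral_add (ib.sub ia) iD, intervalIntegral.integral_sub ib ia] at parts
  have split := intervalIntegral.integral_add_adjacent_intervals ib ib2
  unfold energy
  rw [← split]
  have z1 := hS.bc_free a haI
  have z2 := hS.bc_zero a haI
  have z3 := hS.bc_zero b hbI
  rw [← z2, ← z3]
  simp only [z1] at parts
  linear_combination (1 / 2) * parts

lemma mass_diff (hS : IsSolOn p s₀ φ T s u) {a b : ℝ} (ha : 0 ≤ a) (hab : a < b) (hb : b ≤ T) :
    L1Norm s u b - L1Norm s u a =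
      (∫ x in (0:ℝ)..(s a), (u b x - u a x)) + ∫ x in (s a)..(s b), u b x := by
  have haI : a ∈ Icc 0 T := ⟨by linarith, by linarith⟩
  have hbI : b ∈ Icc 0 T := ⟨by linarith, by linarith⟩
  have hsa := hS.s_pos a haI
  have hsab : s a ≤ s b := sol_mono hS haI hbI hab.le
  have cub := (sol_ucont hS hbI)
  have cua := sol_ucont hS haI
  have i1 : IntervalIntegrable (u b) volume 0 (s a) :=
    ContinuousOn.intervalIntegrable (by
      rw [uIcc_of_le hsa.le]; exact cub.mono (Icc_subset_Icc le_rfl hsab))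
  have i2 : IntervalIntegrable (u a) volume 0 (s a) :=
    ContinuousOn.intervalIntegrable (by rw [uIcc_of_le hsa.le]; exact cua)
  have i3 : IntervalIntegrable (u b) volume (s a) (s b) :=
    ContinuousOn.intervalIntegrable (by
      rw [uIcc_of_le hsab]; exact cub.mono (Icc_subset_Icc hsa.le le_rfl))
  rw [intervalIntegral.integral_sub i1 i2]
  unfold L1Norm
  rw [← intervalIntegral.integral_add_adjacent_intervals i1 i3]
  ring

lemma flux (hS : IsSolOn p s₀ φ T s u) (ht1 : 0 < t1)
    (hC : ∀ t ∈ Icc t1 T, ∀ x ∈ Ioo 0 (s t), |deriv (deriv (u t)) x| ≤ C * (1 + x ^ (-1 / 4 : ℝ)))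
    {t : ℝ} (ht : t ∈ Icc t1 T) :
    ∫ x in (0:ℝ)..(s t), deriv (deriv (u t)) x = - deriv s t + u t 0 ^ p := by
  have htI : t ∈ Ioc 0 T := ⟨ht1.trans_le ht.1, ht.2⟩
  have hst := hS.s_pos t (Ioc_Icc htI)
  rw [intervalIntegral.integral_eq_sub_of_hasDerivAt_of_le (f := deriv (u t)) hst.le
    (sol_uxcont hS htI) (fun x hx => (hS.uxx_diff t htI x hx).hasDerivAt)
    (intble hst.le (gint C (-1 / 4) _ (by norm_num)) (sol_uxxcont hS htI) (hC t ht)),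
    hS.stefan t htI, ← hS.bc_zero t htI]
  ring

end sol8

section sol9
variable {p s₀ T : ℝ} {φ s : ℝ → ℝ} {u : ℝ → ℝ → ℝ} {t C : ℝ}

lemma mm_min : Tendsto (fun τ => min t τ) (𝓝[≠] t) (𝓝 t) := by
  have : Tendsto (fun τ => min t τ) (𝓝 t) (𝓝 (min t t)) := Continuous.tendsto (by fun_prop) t
  rw [min_self] at this
  exact this.mono_left nhdsWithin_le_nhds

lemma mm_max : Tendsto (fun τ => max t τ) (𝓝[≠] t) (𝓝 t) := by
  have : Tendsto (fun τ => max t τ) (𝓝 t) (𝓝 (max t t)) := Continuous.tendsto (by fun_prop) t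
  rw [max_self] at this
  exact this.mono_left nhdsWithin_le_nhds

lemma mm_ev (ht : 0 < t) (htT : t < T) :
    ∀ᶠ τ in 𝓝[≠] t, t / 2 ≤ min t τ ∧ min t τ < max t τ ∧ max t τ ≤ T := by
  filter_upwards [mm_min.eventually (lt_mem_nhds (by linarith : t / 2 < t)),
    mm_max.eventually (gt_mem_nhds htT), self_mem_nhdsWithin] with τ h1 h2 h3
  exact ⟨h1.le, min_lt_max.2 (Ne.symm h3), h2.le⟩

lemma s_lim (hS : IsSolOn p s₀ φ T s u) (ht : t ∈ Ioc 0 T) {l : Filter ℝ} {β : ℝ → ℝ}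
    (hβ : Tendsto β l (𝓝 t)) : Tendsto (fun τ => s (β τ)) l (𝓝 (s t)) :=
  (hS.s_diff t ht).continuousAt.tendsto.comp hβ

lemma ux_lim (hS : IsSolOn p s₀ φ T s u) (ht : t ∈ Ioc 0 T) {l : Filter ℝ} {β ξ : ℝ → ℝ} {x : ℝ}
    (hx : x ∈ Icc 0 (s t)) (hβ : Tendsto β l (𝓝 t)) (hξ : Tendsto ξ l (𝓝 x))
    (hm : ∀ᶠ τ in l, β τ ∈ Ioc 0 T ∧ ξ τ ∈ Icc 0 (s (β τ))) :
    Tendsto (fun τ => deriv (u (β τ)) (ξ τ)) l (𝓝 (deriv (u t) x)) := by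
  have h1 : Tendsto (fun τ => (β τ, ξ τ)) l
      (𝓝[{q : ℝ × ℝ | q.1 ∈ Ioc 0 T ∧ q.2 ∈ Icc 0 (s q.1)}] (t, x)) :=
    tendsto_nhdsWithin_iff.2 ⟨hβ.prodMk_nhds hξ, hm⟩
  exact (hS.ux_cont (t, x) ⟨ht, hx⟩).tendsto.comp h1

lemma u_lim (hS : IsSolOn p s₀ φ T s u) (ht : t ∈ Icc 0 T) {l : Filter ℝ} {β ξ : ℝ → ℝ} {x : ℝ}
    (hx : x ∈ Icc 0 (s t)) (hβ : Tendsto β l (𝓝 t)) (hξ : Tendsto ξ l (𝓝 x))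
    (hm : ∀ᶠ τ in l, β τ ∈ Icc 0 T ∧ ξ τ ∈ Icc 0 (s (β τ))) :
    Tendsto (fun τ => u (β τ) (ξ τ)) l (𝓝 (u t x)) := by
  have h1 : Tendsto (fun τ => (β τ, ξ τ)) l
      (𝓝[{q : ℝ × ℝ | q.1 ∈ Icc 0 T ∧ q.2 ∈ Icc 0 (s q.1)}] (t, x)) :=
    tendsto_nhdsWithin_iff.2 ⟨hβ.prodMk_nhds hξ, hm⟩
  exact (hS.u_cont (t, x) ⟨ht, hx⟩).tendsto.comp h1

lemma uxx_lim (hS : IsSolOn p s₀ φ T s u) (ht : t ∈ Ioc 0 T) {l : Filter ℝ} {β : ℝ → ℝ} {x : ℝ}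
    (hx : x ∈ Ioo 0 (s t)) (hβ : Tendsto β l (𝓝 t)) (hm : ∀ᶠ τ in l, β τ ∈ Ioc 0 T) :
    Tendsto (fun τ => deriv (deriv (u (β τ))) x) l (𝓝 (deriv (deriv (u t)) x)) := by
  have h1 : Tendsto (fun τ => (β τ, x)) l
      (𝓝[{q : ℝ × ℝ | q.1 ∈ Ioc 0 T ∧ q.2 ∈ Ioo 0 (s q.1)}] (t, x)) := by
    refine tendsto_nhdsWithin_iff.2 ⟨hβ.prodMk_nhds tendsto_const_nhds, ?_⟩
    filter_upwards [hm, (s_lim hS ht hβ).eventually (lt_mem_nhds hx.2)] with τ h1 h2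
    exact ⟨h1, hx.1, h2⟩
  exact (hS.uxx_cont (t, x) ⟨ht, hx⟩).tendsto.comp h1

lemma dq_lim (hS : IsSolOn p s₀ φ T s u) (ht : t ∈ Ioc 0 T) {x : ℝ} (hx : x ∈ Ioo 0 (s t)) :
    Tendsto (fun τ => (u (max t τ) x - u (min t τ) x) / (max t τ - min t τ)) (𝓝[≠] t)
      (𝓝 (deriv (deriv (u t)) x)) := by
  have := hasDerivAt_iff_tendsto_slope.1 (sol_heat hS ht hx).2.2
  refine this.congr (fun τ => ?_)
  rw [slope_mm]

lemma s_slope (hS : IsSolOn p s₀ φ T s u) (ht : t ∈ Ioc 0 T) :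
    Tendsto (fun τ => (s (max t τ) - s (min t τ)) / (max t τ - min t τ)) (𝓝[≠] t)
      (𝓝 (deriv s t)) := by
  refine (hasDerivAt_iff_tendsto_slope.1 (sol_sd hS ht).1).congr (fun τ => ?_)
  rw [slope_mm]

lemma L1_deriv (hS : IsSolOn p s₀ φ T s u) (ht : 0 < t) (htT : t < T)
    (hC : ∀ τ ∈ Icc (t / 2) T, ∀ x ∈ Ioo 0 (s τ),
      |deriv (deriv (u τ)) x| ≤ C * (1 + x ^ (-1 / 4 : ℝ))) :
    HasDerivAt (L1Norm s u) (- deriv s t + u t 0 ^ p) t := by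
  have htI : t ∈ Ioc 0 T := ⟨ht, htT.le⟩
  have hst := hS.s_pos t (Ioc_Icc htI)
  have ev := mm_ev ht htT
  rw [hasDerivAt_iff_tendsto_slope, ← flux hS (by linarith) hC ⟨by linarith, htT.le⟩]
  have A := dct (l := 𝓝[≠] t) (S := s t) (σ := fun τ => s (min t τ))
    (F := fun τ x => (u (max t τ) x - u (min t τ) x) / (max t τ - min t τ))
    (f := deriv (deriv (u t))) (g := fun x => C * (1 + x ^ (-1 / 4 : ℝ))) hst
    (s_lim hS htI mm_min) (gint _ _ _ (by norm_num)) (by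
      filter_upwards [ev] with τ h
      have m1 : min t τ ∈ Icc 0 T := ⟨by linarith [h.1], by linarith⟩
      have m2 : max t τ ∈ Icc 0 T := ⟨by linarith [h.1], by linarith⟩
      have hs : s (min t τ) ≤ s (max t τ) := sol_mono hS m1 m2 h.2.1.le
      exact (((sol_ucont hS m2).mono (Ioo_subset_Icc_self.trans (Icc_subset_Icc le_rfl hs))).sub
        ((sol_ucont hS m1).mono Ioo_subset_Icc_self)).div_const _) (by
      filter_upwards [ev] with τ h x hx
      have := D_bound hS (by linarith) hC h.1 h.2.1 h.2.2 hx
      have hpos : 0 < max t τ - min t τ := by linarith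
      rw [abs_div, abs_of_pos hpos, div_le_iff₀ hpos]
      linarith) (fun x hx => dq_lim hS htI hx)
  have B : ∀ᶠ τ in 𝓝[≠] t, ∃ c, c ∈ Icc (s (min t τ)) (s (max t τ)) ∧
      ∫ x in (s (min t τ))..(s (max t τ)), u (max t τ) x =
        (s (max t τ) - s (min t τ)) * u (max t τ) c := by
    filter_upwards [ev] with τ h
    have m1 : min t τ ∈ Icc 0 T := ⟨by linarith [h.1], by linarith⟩
    have m2 : max t τ ∈ Icc 0 T := ⟨by linarith [h.1], by linarith⟩
    have hs : s (min t τ) ≤ s (max t τ) := sol_mono hS m1 m2 h.2.1.le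
    obtain ⟨c, hc1, hc2⟩ := mean_int hs ((sol_ucont hS m2).mono
      (Icc_subset_Icc (hS.s_pos _ m1).le le_rfl))
    exact ⟨c, hc1, hc2⟩
  obtain ⟨ξ, hξ⟩ := B.choice
  have hξl : Tendsto ξ (𝓝[≠] t) (𝓝 (s t)) :=
    tendsto_of_tendsto_of_tendsto_of_le_of_le' (s_lim hS htI mm_min) (s_lim hS htI mm_max)
      (hξ.mono fun τ h => h.1.1) (hξ.mono fun τ h => h.1.2)
  have Cc := u_lim hS (Ioc_Icc htI) ⟨hst.le, le_rfl⟩ (mm_max (t := t)) hξl (by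
    filter_upwards [ev, hξ] with τ h h'
    have m1 : min t τ ∈ Icc 0 T := ⟨by linarith [h.1], by linarith⟩
    exact ⟨⟨by linarith [h.1], by linarith⟩, (hS.s_pos _ m1).le.trans h'.1.1, h'.1.2⟩)
  have D := A.add ((s_slope hS htI).mul Cc)
  rw [hS.bc_free t htI, mul_zero, add_zero] at D
  refine D.congr' ?_
  filter_upwards [ev, hξ] with τ h h'
  rw [slope_mm, mass_diff hS (by linarith) h.2.1 h.2.2, h'.2, intervalIntegral.integral_div]
  ring

lemma E_deriv (hp : 1 < p) (hS : IsSolOn p s₀ φ T s u) (ht : 0 < t) (htT : t < T)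
    {K h0 : ℝ} (hh0 : 0 < h0)
    (hC : ∀ τ ∈ Icc (t / 2) T, ∀ x ∈ Ioo 0 (s τ),
      |deriv (deriv (u τ)) x| ≤ C * (1 + x ^ (-1 / 4 : ℝ)))
    (hK : ∀ a b, t / 2 ≤ a → a < b → b ≤ T → b - a ≤ h0 →
      |u b 0 - u a 0| ≤ K * (b - a) ^ (7 / 8 : ℝ)) :
    HasDerivAt (energy p s u)
      (-(∫ x in (0:ℝ)..(s t), (deriv (deriv (u t)) x) ^ 2) - 1 / 2 * (deriv s t) ^ 3) t := by
  have htI : t ∈ Ioc 0 T := ⟨ht, htT.le⟩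
  have hst := hS.s_pos t (Ioc_Icc htI)
  have ev := mm_ev ht htT
  have ht2 : 0 < t / 2 := by linarith
  have ev2 : ∀ᶠ τ in 𝓝[≠] t, min t τ ∈ Ioc 0 T ∧ max t τ ∈ Ioc 0 T ∧
      s (min t τ) ≤ s (max t τ) ∧ 0 < s (min t τ) := by
    filter_upwards [ev] with τ h
    have m1 : min t τ ∈ Ioc 0 T := ⟨by linarith [h.1], by linarith⟩
    have m2 : max t τ ∈ Ioc 0 T := ⟨by linarith [h.1], by linarith⟩
    exact ⟨m1, m2, sol_mono hS (Ioc_Icc m1) (Ioc_Icc m2) h.2.1.le, hS.s_pos _ (Ioc_Icc m1)⟩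
  have sl1 := s_lim hS htI (mm_min (t := t))
  have sl2 := s_lim hS htI (mm_max (t := t))
  have hstI : s t ∈ Icc 0 (s t) := ⟨hst.le, le_rfl⟩
  have hux : deriv (u t) (s t) = - deriv s t := by rw [hS.stefan t htI]; ring
  -- term at the free boundary
  have B1 : ∀ᶠ τ in 𝓝[≠] t, ∃ c, c ∈ Icc (s (min t τ)) (s (max t τ)) ∧
      u (max t τ) (s (min t τ)) = - ((s (max t τ) - s (min t τ)) * deriv (u (max t τ)) c) := by
    filter_upwards [ev2] with τ h
    have hcont := (sol_uxcont hS h.2.1).mono (Icc_subset_Icc h.2.2.2.le (le_refl (s (max t τ))))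
    obtain ⟨c, hc1, hc2⟩ := mean_int h.2.2.1 hcont
    refine ⟨c, hc1, ?_⟩
    rw [← hc2, intervalIntegral.integral_eq_sub_of_hasDerivAt_of_le (f := u (max t τ)) h.2.2.1
      ((sol_ucont hS (Ioc_Icc h.2.1)).mono (Icc_subset_Icc h.2.2.2.le (le_refl (s (max t τ)))))
      (fun x hx => (hS.ux_diff _ h.2.1 x ⟨h.2.2.2.trans hx.1, hx.2⟩).hasDerivAt)
      (ContinuousOn.intervalIntegrable (by rwa [uIcc_of_le h.2.2.1])), hS.bc_free _ h.2.1]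
    ring
  have B2 : ∀ᶠ τ in 𝓝[≠] t, ∃ c, c ∈ Icc (s (min t τ)) (s (max t τ)) ∧
      ∫ x in (s (min t τ))..(s (max t τ)), (deriv (u (max t τ)) x) ^ 2 =
        (s (max t τ) - s (min t τ)) * (deriv (u (max t τ)) c) ^ 2 := by
    filter_upwards [ev2] with τ h
    have hcont := (sol_uxcont hS h.2.1).mono (Icc_subset_Icc h.2.2.2.le (le_refl (s (max t τ))))
    obtain ⟨c, hc1, hc2⟩ := mean_int h.2.2.1 (hcont.pow 2)
    exact ⟨c, hc1, hc2⟩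
  obtain ⟨ξ, hξ⟩ := B1.choice
  obtain ⟨η, hη⟩ := B2.choice
  have lim : ∀ ξ : ℝ → ℝ, (∀ᶠ τ in 𝓝[≠] t, ξ τ ∈ Icc (s (min t τ)) (s (max t τ))) →
      Tendsto (fun τ => deriv (u (max t τ)) (ξ τ)) (𝓝[≠] t) (𝓝 (- deriv s t)) := by
    intro ξ h
    rw [← hux]
    refine ux_lim hS htI hstI mm_max (tendsto_of_tendsto_of_tendsto_of_le_of_le' sl1 sl2
      (h.mono fun τ h => h.1) (h.mono fun τ h => h.2)) ?_
    filter_upwards [h, ev2] with τ h1 h2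
    exact ⟨h2.2.1, h2.2.2.2.le.trans h1.1, h1.2⟩
  have l1 := lim ξ (hξ.mono fun τ h => h.1)
  have l2 := lim η (hη.mono fun τ h => h.1)
  have l3 := lim (fun τ => s (min t τ)) (ev2.mono fun τ h => ⟨le_rfl, h.2.2.1⟩)
  have l4 : Tendsto (fun τ => deriv (u (min t τ)) (s (min t τ))) (𝓝[≠] t) (𝓝 (- deriv s t)) := by
    rw [← hux]
    refine ux_lim hS htI hstI mm_min sl1 ?_
    filter_upwards [ev2] with τ h2
    exact ⟨h2.1, h2.2.2.2.le, le_rfl⟩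
  have l5 := s_slope hS htI
  -- bulk term
  have A := dct (l := 𝓝[≠] t) (S := s t) (σ := fun τ => s (min t τ))
    (F := fun τ x => (u (max t τ) x - u (min t τ) x) / (max t τ - min t τ) *
      (deriv (deriv (u (max t τ))) x + deriv (deriv (u (min t τ))) x))
    (f := fun x => deriv (deriv (u t)) x * (deriv (deriv (u t)) x + deriv (deriv (u t)) x))
    (g := fun x => 2 * C ^ 2 * 2 * (1 + x ^ (-1 / 2 : ℝ))) hst
    sl1 (gint _ _ _ (by norm_num)) (by
      filter_upwards [ev, ev2] with τ h h2
      refine ((((sol_ucont hS (Ioc_Icc h2.2.1)).mono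
        (Ioo_subset_Icc_self.trans (Icc_subset_Icc le_rfl h2.2.2.1))).sub
        ((sol_ucont hS (Ioc_Icc h2.1)).mono Ioo_subset_Icc_self)).div_const _).mul ?_
      exact ((sol_uxxcont hS h2.2.1).mono (Ioo_subset_Ioo le_rfl h2.2.2.1)).add
        (sol_uxxcont hS h2.1)) (by
      filter_upwards [ev, ev2] with τ h h2 x hx
      have k1 := D_bound hS (by linarith) hC h.1 h.2.1 h.2.2 hx
      have hpos : 0 < max t τ - min t τ := by linarith
      have k2 := hC (max t τ) ⟨by linarith, h.2.2⟩ x ⟨hx.1, hx.2.trans_le h2.2.2.1⟩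
      have k3 := hC (min t τ) ⟨h.1, h2.1.2⟩ x hx
      have k4 := (abs_add_le (deriv (deriv (u (max t τ))) x) (deriv (deriv (u (min t τ))) x))
      have k5 := sq_quarter hx.1
      have k6 : |(u (max t τ) x - u (min t τ) x) / (max t τ - min t τ)| ≤
          C * (1 + x ^ (-1 / 4 : ℝ)) := by
        rw [abs_div, abs_of_pos hpos, div_le_iff₀ hpos]
        linarith
      have k7 : 0 ≤ C * (1 + x ^ (-1 / 4 : ℝ)) := (abs_nonneg _).trans k2
      rw [abs_mul]
      calc _ ≤ (C * (1 + x ^ (-1 / 4 : ℝ))) * (2 * (C * (1 + x ^ (-1 / 4 : ℝ)))) := by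
            gcongr; linarith
        _ = 2 * C ^ 2 * ((1 + x ^ (-1 / 4 : ℝ)) ^ 2) := by ring
        _ ≤ 2 * C ^ 2 * (2 * (1 + x ^ (-1 / 2 : ℝ))) := by gcongr
        _ = _ := by ring)
    (fun x hx => (dq_lim hS htI hx).mul
      ((uxx_lim hS htI hx mm_max (ev2.mono fun τ h => h.2.1)).add
        (uxx_lim hS htI hx mm_min (ev2.mono fun τ h => h.1))))
  -- term at zero
  obtain ⟨L, hB⟩ := sol_bd hS ht2
  have hL0 : 0 < L := by linarith [hB.hL]
  have hhl : Tendsto (fun τ => max t τ - min t τ) (𝓝[≠] t) (𝓝 0) := by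
    have := (mm_max (t := t)).sub (mm_min (t := t))
    rwa [sub_self] at this
  have Z : Tendsto (fun τ => (1 / 2 * (u (max t τ) 0 - u (min t τ) 0) *
      (u (min t τ) 0 ^ p + u (max t τ) 0 ^ p)
        - (u (max t τ) 0 ^ (p + 1) - u (min t τ) 0 ^ (p + 1)) / (p + 1)) / (max t τ - min t τ))
      (𝓝[≠] t) (𝓝 0) := by
    refine squeeze_zero_norm'
      (a := fun τ => p * L ^ (p - 1) * K ^ 2 * (max t τ - min t τ) ^ (3 / 4 : ℝ)) ?_ ?_
    · filter_upwards [ev, ev2, hhl.eventually (gt_mem_nhds hh0)] with τ h h2 h3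
      have hpos : 0 < max t τ - min t τ := by linarith
      have i0 : ∀ r ∈ Icc (t / 2) T, u r 0 ∈ Icc 0 L := fun r hr => by
        have hs := (hS.s_pos r (hB.Icc hr)).le
        exact ⟨hS.u_nonneg r (hB.Icc hr) 0 ⟨le_rfl, hs⟩,
          (le_abs_self _).trans (hB.u r hr 0 ⟨le_rfl, hs⟩)⟩
      have t1 := trapezoid hp hL0 (i0 _ ⟨h.1, h2.1.2⟩) (i0 _ ⟨h.1.trans h.2.1.le, h2.2.1.2⟩)
      have t2 := hK _ _ h.1 h.2.1 h.2.2 h3.le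
      have hM : 0 ≤ p * L ^ (p - 1) := by
        have := Real.rpow_pos_of_pos hL0 (p - 1)
        have : 0 < p := by linarith
        positivity
      rw [Real.norm_eq_abs, abs_div, abs_of_pos hpos, div_le_iff₀ hpos]
      refine t1.trans ?_
      calc p * L ^ (p - 1) * |u (max t τ) 0 - u (min t τ) 0| ^ 2
          ≤ p * L ^ (p - 1) * (K * (max t τ - min t τ) ^ (7 / 8 : ℝ)) ^ 2 := by gcongr
        _ = p * L ^ (p - 1) * K ^ 2 * ((max t τ - min t τ) ^ (7 / 8 : ℝ)) ^ 2 := by ring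
        _ = p * L ^ (p - 1) * K ^ 2 *
            ((max t τ - min t τ) ^ (3 / 4 : ℝ) * (max t τ - min t τ)) := by
          congr 1
          rw [← Real.rpow_natCast, ← Real.rpow_mul hpos.le, ← Real.rpow_add_one hpos.ne']
          norm_num
        _ = _ := by ring
    · have := (hhl.rpow_const (p := (3 / 4 : ℝ)) (Or.inr (by norm_num))).const_mul
        (p * L ^ (p - 1) * K ^ 2)
      rwa [Real.zero_rpow (by norm_num), mul_zero] at this
  have tot := ((((l5.mul l1).neg.mul (l3.add l4)).const_mul (1 / 2)).sub (A.const_mul (1 / 2))).add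
    ((l5.mul (l2.pow 2)).const_mul (1 / 2)) |>.add Z
  rw [hasDerivAt_iff_tendsto_slope]
  have e1 : ∫ x in (0:ℝ)..(s t),
      deriv (deriv (u t)) x * (deriv (deriv (u t)) x + deriv (deriv (u t)) x) =
      2 * ∫ x in (0:ℝ)..(s t), (deriv (deriv (u t)) x) ^ 2 := by
    rw [← intervalIntegral.integral_const_mul]
    congr 1; ext x; ring
  rw [e1] at tot
  have e2 : ∀ I d : ℝ, 1 / 2 * (-(d * -d) * (-d + -d)) - 1 / 2 * (2 * I) + 1 / 2 * (d * (-d) ^ 2) + 0 =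
    -I - 1 / 2 * d ^ 3 := fun I d => by ring
  rw [e2] at tot
  refine tot.congr' ?_
  filter_upwards [ev, hξ, hη] with τ h h1 h2
  have hpos : max t τ - min t τ ≠ 0 := by linarith
  rw [slope_mm, energy_diff hS ht2 hC h.1 h.2.1 h.2.2, h2.2, h1.2]
  have e3 : ∫ x in (0:ℝ)..(s (min t τ)), (u (max t τ) x - u (min t τ) x) / (max t τ - min t τ) *
      (deriv (deriv (u (max t τ))) x + deriv (deriv (u (min t τ))) x) =
      (∫ x in (0:ℝ)..(s (min t τ)), (u (max t τ) x - u (min t τ) x) *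
      (deriv (deriv (u (max t τ))) x + deriv (deriv (u (min t τ))) x)) / (max t τ - min t τ) := by
    rw [← intervalIntegral.integral_div]
    congr 1; ext x; ring
  rw [e3]
  ring

lemma G_cont (hS : IsSolOn p s₀ φ T s u) (ht : 0 < t) (htT : t < T)
    (hC : ∀ τ ∈ Icc (t / 2) T, ∀ x ∈ Ioo 0 (s τ),
      |deriv (deriv (u τ)) x| ≤ C * (1 + x ^ (-1 / 4 : ℝ))) :
    ContinuousAt (fun τ => ∫ x in (0:ℝ)..(s τ), (deriv (deriv (u τ)) x) ^ 2) t := by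
  have htI : t ∈ Ioc 0 T := ⟨ht, htT.le⟩
  have hst := hS.s_pos t (Ioc_Icc htI)
  have ev : ∀ᶠ τ in 𝓝 t, τ ∈ Icc (t / 2) T := Icc_mem_nhds (by linarith) htT
  refine dct (l := 𝓝 t) (S := s t) (σ := s) (F := fun τ x => (deriv (deriv (u τ)) x) ^ 2)
    (f := fun x => (deriv (deriv (u t)) x) ^ 2)
    (g := fun x => C ^ 2 * 2 * (1 + x ^ (-1 / 2 : ℝ))) hst (s_lim hS htI tendsto_id)
    (gint _ _ _ (by norm_num)) ?_ ?_ ?_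
  · filter_upwards [ev] with τ h
    exact (sol_uxxcont hS ⟨by linarith [h.1], h.2⟩).pow 2
  · filter_upwards [ev] with τ h x hx
    have k := hC τ h x hx
    rw [abs_pow]
    calc _ ≤ (C * (1 + x ^ (-1 / 4 : ℝ))) ^ 2 := by gcongr
      _ = C ^ 2 * (1 + x ^ (-1 / 4 : ℝ)) ^ 2 := by ring
      _ ≤ C ^ 2 * (2 * (1 + x ^ (-1 / 2 : ℝ))) := by gcongr; exact sq_quarter hx.1
      _ = _ := by ring
  · intro x hx
    exact (uxx_lim hS htI hx tendsto_id (ev.mono fun τ h =>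
      ⟨lt_of_lt_of_le (by linarith : 0 < t / 2) h.1, h.2⟩)).pow 2

lemma L1_cont (hS : IsSolOn p s₀ φ T s u) : ContinuousOn (L1Norm s u) (Icc 0 T) := by
  intro t ht
  have hst := hS.s_pos t ht
  have hK := slab_compact (δ := 0) (T := T) (α := fun _ => 0) (β := s) continuousOn_const
    hS.s_cont (fun t ht => (hS.s_pos t ht).le)
  obtain ⟨L, hL⟩ := hK.exists_bound_of_continuousOn (f := fun q : ℝ × ℝ => u q.1 q.2) hS.u_cont
  have sl : Tendsto s (𝓝[Icc 0 T] t) (𝓝 (s t)) := hS.s_cont t ht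
  refine dct (l := 𝓝[Icc 0 T] t) (S := s t) (σ := s) (F := u)
    (f := u t) (g := fun _ => L) hst sl intervalIntegrable_const ?_ ?_ ?_
  · filter_upwards [self_mem_nhdsWithin] with τ h
    exact (sol_ucont hS h).mono Ioo_subset_Icc_self
  · filter_upwards [self_mem_nhdsWithin] with τ h x hx
    exact hL (τ, x) ⟨h, Ioo_subset_Icc_self hx⟩
  · intro x hx
    refine u_lim hS ht (Ioo_subset_Icc_self hx) (tendsto_id.mono_left nhdsWithin_le_nhds)
      tendsto_const_nhds ?_
    filter_upwards [self_mem_nhdsWithin, sl.eventually (lt_mem_nhds hx.2)] with τ h h2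
    exact ⟨h, hx.1.le, h2.le⟩

lemma u0_cont (hS : IsSolOn p s₀ φ T s u) : ContinuousOn (fun τ => u τ 0) (Icc 0 T) :=
  hS.u_cont.comp (f := fun τ : ℝ => (τ, (0:ℝ))) (by fun_prop)
    (fun τ hτ => ⟨hτ, le_rfl, (hS.s_pos τ hτ).le⟩)

end sol9

/-- Lemma 2.1: energy and mass identities for solutions on `(0,T)`, `T ∈ (0,∞]`. -/
theorem stmt_5 (p : ℝ) (hp : 1 < p) (s₀ : ℝ) (φ : ℝ → ℝ) (hW : memW s₀ φ)
    (T : ℝ≥0∞) (hT : 0 < T) (s : ℝ → ℝ) (u : ℝ → ℝ → ℝ)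
    (hsol : ∀ T' : ℝ, 0 < T' → ENNReal.ofReal T' < T → IsSolOn p s₀ φ T' s u) :
    (∀ t : ℝ, 0 < t → ENNReal.ofReal t < T →
      HasDerivAt (fun τ => energy p s u τ)
        (-(∫ x in (0:ℝ)..(s t), (deriv (fun τ => u τ x) t) ^ 2)
          - 1 / 2 * (deriv s t) ^ 3) t ∧
      L1Norm s u t - (∫ x in (0:ℝ)..s₀, φ x) =
        s₀ - s t + ∫ τ in (0:ℝ)..t, u τ 0 ^ p) ∧
    (∀ t₁ t₂ : ℝ, 0 < t₁ → t₁ ≤ t₂ → ENNReal.ofReal t₂ < T →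
      (∫ τ in t₁..t₂, ∫ x in (0:ℝ)..(s τ), (deriv (fun r => u r x) τ) ^ 2) +
          1 / 2 * ∫ τ in t₁..t₂, (deriv s τ) ^ 3 =
        energy p s u t₁ - energy p s u t₂) := by
  have ext : ∀ t : ℝ, 0 < t → ENNReal.ofReal t < T → ∃ T', t < T' ∧ ENNReal.ofReal T' < T := by
    intro t ht htT
    obtain ⟨r, hr1, hr2⟩ := ENNReal.lt_iff_exists_nnreal_btwn.1 htT
    refine ⟨r, ?_, by rwa [ENNReal.ofReal_coe_nnreal]⟩
    rw [← ENNReal.ofReal_coe_nnreal] at hr1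
    exact (ENNReal.ofReal_lt_ofReal_iff_of_nonneg ht.le).1 hr1
  have heatI : ∀ t : ℝ, 0 < t → ENNReal.ofReal t < T →
      ∫ x in (0:ℝ)..(s t), (deriv (fun τ => u τ x) t) ^ 2 =
      ∫ x in (0:ℝ)..(s t), (deriv (deriv (u t)) x) ^ 2 := by
    intro t ht htT
    have hS := hsol t ht htT
    have htI : t ∈ Ioc 0 t := ⟨ht, le_rfl⟩
    refine ii_congr (hS.s_pos t (Ioc_Icc htI)).le (fun x hx => ?_)
    rw [hS.heat t htI x hx]
  have dE : ∀ t : ℝ, 0 < t → ENNReal.ofReal t < T →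
      HasDerivAt (fun τ => energy p s u τ)
        (-(∫ x in (0:ℝ)..(s t), (deriv (fun τ => u τ x) t) ^ 2)
          - 1 / 2 * (deriv s t) ^ 3) t := by
    intro t ht htT
    obtain ⟨T', htT', hT'⟩ := ext t ht htT
    have hS := hsol T' (ht.trans htT') hT'
    obtain ⟨C, K, h0, hC, hK, hh0, h1, h2⟩ := mainprop hp hS (half_pos ht) (by linarith)
    rw [heatI t ht htT]
    exact E_deriv hp hS ht htT' hh0 h1 h2
  refine ⟨fun t ht htT => ⟨dE t ht htT, ?_⟩, ?_⟩
  · have hS := hsol t ht htT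
    have hd : ∀ τ ∈ Ioo 0 t, HasDerivAt (fun r => L1Norm s u r + s r) (u τ 0 ^ p) τ := by
      intro τ hτ
      obtain ⟨C, K, h0, hC, hK, hh0, h1, h2⟩ := mainprop hp hS (half_pos hτ.1)
        (by linarith [hτ.1, hτ.2])
      have := (L1_deriv hS hτ.1 hτ.2 h1).add (sol_sd hS ⟨hτ.1, hτ.2.le⟩).1
      refine this.congr_deriv ?_
      ring
    have hint : IntervalIntegrable (fun τ => u τ 0 ^ p) volume 0 t :=
      ContinuousOn.intervalIntegrable (by
        rw [uIcc_of_le ht.le]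
        exact (u0_cont hS).rpow_const (fun x _ => Or.inr (by linarith)))
    have key := intervalIntegral.integral_eq_sub_of_hasDerivAt_of_le ht.le
      ((L1_cont hS).add hS.s_cont) hd hint
    have i0 : L1Norm s u 0 = ∫ x in (0:ℝ)..s₀, φ x := by
      unfold L1Norm
      rw [hS.init_s]
      exact ii_congr hW.1.le (fun x hx => hS.init x (Ioo_subset_Icc_self hx))
    have i1 := hS.init_s
    simp only [Pi.add_apply] at key
    rw [key, i0, i1]
    ring
  · intro t₁ t₂ ht₁ h12 ht₂
    have lt2 : ∀ τ ∈ uIcc t₁ t₂, 0 < τ ∧ ENNReal.ofReal τ < T := by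
      intro τ hτ
      rw [uIcc_of_le h12] at hτ
      exact ⟨ht₁.trans_le hτ.1, (ENNReal.ofReal_le_ofReal hτ.2).trans_lt ht₂⟩
    have c1 : ContinuousOn
        (fun τ => ∫ x in (0:ℝ)..(s τ), (deriv (fun r => u r x) τ) ^ 2) (uIcc t₁ t₂) := by
      have c0 : ContinuousOn
          (fun τ => ∫ x in (0:ℝ)..(s τ), (deriv (deriv (u τ)) x) ^ 2) (uIcc t₁ t₂) := by
        intro τ hτ
        obtain ⟨hτ0, hτT⟩ := lt2 τ hτ
        obtain ⟨T', htT', hT'⟩ := ext τ hτ0 hτT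
        have hS := hsol T' (hτ0.trans htT') hT'
        obtain ⟨C, K, h0, hC, hK, hh0, h1, h2⟩ := mainprop hp hS (half_pos hτ0) (by linarith)
        exact (G_cont hS hτ0 htT' h1).continuousWithinAt
      exact c0.congr (fun τ hτ => heatI τ (lt2 τ hτ).1 (lt2 τ hτ).2)
    have c2 : ContinuousOn (fun τ => (deriv s τ) ^ 3) (uIcc t₁ t₂) := by
      have hS := hsol t₂ (ht₁.trans_le h12) ht₂
      refine (hS.s_deriv_cont.mono ?_).pow 3
      rw [uIcc_of_le h12]
      exact fun τ hτ => ⟨ht₁.trans_le hτ.1, hτ.2⟩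
    have i1 := c1.intervalIntegrable (μ := volume)
    have i2 := c2.intervalIntegrable (μ := volume)
    have key := intervalIntegral.integral_eq_sub_of_hasDerivAt
      (fun τ hτ => dE τ (lt2 τ hτ).1 (lt2 τ hτ).2) (i1.neg.sub (i2.const_mul (1 / 2)))
    have e := intervalIntegral.integral_sub i1.neg (i2.const_mul (1 / 2))
    simp only [Pi.neg_apply] at e
    rw [e, intervalIntegral.integral_neg, intervalIntegral.integral_const_mul] at key
    linarith
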